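/- Let N ≥ 20 be a natural number and let μ* = Σ_{i=1}^M c_i δ_{x_i} be a signed measure on SO(3) with M ∈ ℕ, nonzero real coefficients c_i, and pairwise distinct points x_i ∈ SO(3) whose separation distance satisfies ρ({x_1,…,x_M}) ≥ 36/(N+1). Then μ* is the unique solution of the minimization problem: minimize ‖μ‖_TV over all finite signed Borel measures μ on SO(3) subject to ⟨μ, D^l_{k,m}⟩ = ⟨μ*, D^l_{k,m}⟩ for all 0 ≤ l ≤ N and all −l ≤ k,m ≤ l. -/

import Mathlib

noncomputable section

open MeasureTheory
open scoped ENNReal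

abbrev Mat3 := Matrix (Fin 3) (Fin 3) ℝ

/-- membership in SO(3) -/
def IsSO3 (x : Mat3) : Prop := x.transpose * x = 1 ∧ x.det = 1

/-- the rotation group SO(3) -/
def SO3 : Type := {x : Mat3 // IsSO3 x}

instance : TopologicalSpace SO3 := instTopologicalSpaceSubtype
instance : MeasurableSpace SO3 := borel SO3

/-- coercion to matrices -/
instance : CoeHead SO3 Mat3 := ⟨Subtype.val⟩

/-- rotation angle -/
def rotAngle (x : Mat3) : ℝ := Real.arccos ((Matrix.trace x - 1) / 2)

/-- rotation about the z-axis -/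
def Rz (t : ℝ) : Mat3 :=
  !![Real.cos t, -Real.sin t, 0; Real.sin t, Real.cos t, 0; 0, 0, 1]

/-- rotation about the x-axis -/
def Rx (t : ℝ) : Mat3 :=
  !![1, 0, 0; 0, Real.cos t, -Real.sin t; 0, Real.sin t, Real.cos t]

/-- the normalizing constant C_{l,k,m} of the Wigner function P^l_{k,m} -/
def wignerC (l : ℕ) (k m : ℤ) : ℂ :=
  ((-1 : ℂ) ^ ((l : ℤ) - k) * Complex.I ^ (m - k) /
      (2 ^ l * ((((l : ℤ) - k).toNat.factorial : ℝ) : ℂ))) *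
    (Real.sqrt
      (((((l : ℤ) - k).toNat.factorial : ℝ) * ((((l : ℤ) + m).toNat.factorial : ℝ))) /
        ((((l : ℤ) + k).toNat.factorial : ℝ) * ((((l : ℤ) - m).toNat.factorial : ℝ)))) : ℝ)

/-- the function P^l_{k,m} -/
def wignerP (l : ℕ) (k m : ℤ) (t : ℝ) : ℂ :=
  wignerC l k m * ((1 - t : ℂ) ^ (-(((m - k : ℤ) : ℂ)) / 2)) *
    ((1 + t : ℂ) ^ (-(((m + k : ℤ) : ℂ)) / 2)) *
    ((iteratedDeriv ((l : ℤ) - m).toNat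
        (fun u : ℝ => (1 - u) ^ ((l : ℤ) - k).toNat * (1 + u) ^ ((l : ℤ) + k).toNat) t : ℝ) : ℂ)

/-- the Wigner D-function in Euler angles -/
def wignerDFormula (l : ℕ) (k m : ℤ) (α β γ : ℝ) : ℂ :=
  Complex.exp (-(k : ℂ) * α * Complex.I) * wignerP l k m (Real.cos β) *
    Complex.exp (-(m : ℂ) * γ * Complex.I)

/-- `D` is the family of Wigner D-functions (on matrices) -/
def IsWignerFamily (D : ℕ → ℤ → ℤ → Mat3 → ℂ) : Prop :=
  ∀ (l : ℕ) (k m : ℤ), -(l : ℤ) ≤ k → k ≤ l → -(l : ℤ) ≤ m → m ≤ l →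
    ∀ α β γ : ℝ, 0 ≤ β → β ≤ Real.pi →
      D l k m (Rz α * Rx β * Rz γ) = wignerDFormula l k m α β γ

/-- the Dirac measure at `x` as a signed measure -/
def diracSM (x : SO3) : SignedMeasure SO3 := (Measure.dirac x).toSignedMeasure

/-- pairing of a signed measure with a complex-valued function, ⟨μ, f⟩ = ∫ f dμ -/
def pairSM (μ : SignedMeasure SO3) (f : SO3 → ℂ) : ℂ :=
  (∫ a, f a ∂μ.toJordanDecomposition.posPart) - ∫ a, f a ∂μ.toJordanDecomposition.negPart

/-- total variation norm ‖μ‖_TV = |μ|(SO(3)) -/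
def tvNorm (μ : SignedMeasure SO3) : ℝ≥0∞ := μ.totalVariation Set.univ

end

/-!
Unit quaternions cover `SO(3)` by the sphere `S³` two to one, and the rotation angle between two
rotations is twice the angle between the lines through their quaternions. Given signs at the
support points, an even trigonometric bump, the eighth power of the normalised Dirichlet kernel of
order `n ≈ N / 4`, is placed at every support point together with a derivative correction. The
separation makes the Hermite system (prescribed signs, vanishing gradients) diagonally dominant, so
it has a solution `q`, and the same kernel estimates give `|q| < 1` off the support: near a support
point from the concavity of the bump, elsewhere from the decay of the kernel and a packing bound
in dimension four. As an even polynomial of degree at most `2N` in the quaternion coordinates, `q`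
lies in the span of the Wigner functions of degree at most `N`. Hence `∫ q d(μ - μ*) = 0`; choosing
the signs to be those of `μ - μ*`, this forces `μ - μ*` to have more mass off the support of `μ*`
than on it, so that `μ` has larger total variation than `μ*`.
-/

section Packing

open MeasureTheory Metric Module
open scoped ENNReal

variable {E ι : Type*} [NormedAddCommGroup E] [NormedSpace ℝ E] [FiniteDimensional ℝ E]
  {u : ι → E} {s : Finset ι} {Δ : ℝ}

-- The balls of radius `Δ / 2` around the points are disjoint and contained in a ball of
-- radius `R + Δ / 2`.
theorem card_le_of_norm_le_of_pairwise_le_norm_sub {R : ℝ} (hΔ : 0 < Δ) (hR : 0 ≤ R)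
    (hu : ∀ i ∈ s, ‖u i‖ ≤ R) (hsep : (s : Set ι).Pairwise fun i j => Δ ≤ ‖u i - u j‖) :
    (s.card : ℝ) ≤ (1 + 2 * R / Δ) ^ finrank ℝ E := by
  borelize E
  let μ : Measure E := Measure.addHaar
  have hδ : 0 < Δ / 2 := by positivity
  have hr : 0 < R + Δ / 2 := by positivity
  have hdisj : (s : Set ι).PairwiseDisjoint fun i => ball (u i) (Δ / 2) := fun i hi j hj hij =>
    ball_disjoint_ball (by rw [dist_eq_norm, add_halves]; exact hsep hi hj hij)
  have hsub : ⋃ i ∈ s, ball (u i) (Δ / 2) ⊆ ball 0 (R + Δ / 2) :=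
    Set.iUnion₂_subset fun i hi => ball_subset_ball' (by
      rw [dist_zero_right]; linarith [hu i hi])
  have hvol : s.card * ENNReal.ofReal ((Δ / 2) ^ finrank ℝ E) * μ (ball 0 1) ≤
      ENNReal.ofReal ((R + Δ / 2) ^ finrank ℝ E) * μ (ball 0 1) :=
    calc s.card * ENNReal.ofReal ((Δ / 2) ^ finrank ℝ E) * μ (ball 0 1)
        = μ (⋃ i ∈ s, ball (u i) (Δ / 2)) := by
          rw [measure_biUnion_finset hdisj fun i _ => measurableSet_ball]
          simp only [μ.addHaar_ball_of_pos _ hδ, Finset.sum_const, nsmul_eq_mul, mul_assoc]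
      _ ≤ μ (ball 0 (R + Δ / 2)) := measure_mono hsub
      _ = _ := μ.addHaar_ball_of_pos _ hr
  have hcard : s.card * (Δ / 2) ^ finrank ℝ E ≤ (R + Δ / 2) ^ finrank ℝ E := by
    have h := ENNReal.toReal_le_of_le_ofReal (by positivity)
      ((ENNReal.mul_le_mul_iff_left (measure_ball_pos μ 0 one_pos).ne' measure_ball_lt_top.ne).1
        hvol)
    rwa [ENNReal.toReal_mul, ENNReal.toReal_ofReal (by positivity), ENNReal.toReal_natCast] at h
  calc (s.card : ℝ) ≤ (R + Δ / 2) ^ finrank ℝ E / (Δ / 2) ^ finrank ℝ E :=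
        (le_div_iff₀ (by positivity)).2 hcard
    _ = (1 + 2 * R / Δ) ^ finrank ℝ E := by rw [← div_pow]; congr 1; field_simp; ring

theorem sum_filter_norm_lt_le_of_le {f : ι → ℝ} {ρ B : ℝ} (hΔ : 0 < Δ) (hρ : 0 ≤ ρ) (hB : 0 ≤ B)
    (hf : ∀ i ∈ s, f i ≤ B) (hsep : (s : Set ι).Pairwise fun i j => Δ ≤ ‖u i - u j‖) :
    ∑ i ∈ s with ‖u i‖ < 2 * ρ, f i ≤ (1 + 4 * ρ / Δ) ^ finrank ℝ E * B := by
  have hcard := card_le_of_norm_le_of_pairwise_le_norm_sub (u := u)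
    (s := s.filter fun i => ‖u i‖ < 2 * ρ) (R := 2 * ρ) hΔ (by positivity)
    (fun i hi => (Finset.mem_filter.1 hi).2.le)
    (hsep.mono (by exact_mod_cast Finset.filter_subset _ _))
  calc ∑ i ∈ s with ‖u i‖ < 2 * ρ, f i
      ≤ ∑ i ∈ s with ‖u i‖ < 2 * ρ, B :=
        Finset.sum_le_sum fun i hi => hf i (Finset.mem_filter.1 hi).1
    _ = (s.filter fun i => ‖u i‖ < 2 * ρ).card * B := by rw [Finset.sum_const, nsmul_eq_mul]
    _ ≤ (1 + 2 * (2 * ρ) / Δ) ^ finrank ℝ E * B := by gcongr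
    _ = (1 + 4 * ρ / Δ) ^ finrank ℝ E * B := by ring

-- Dyadic shells: passing from `ρ` to `2 * ρ` shrinks the bound by the factor `2 ^ d / 2 ^ k`,
-- so the shells sum to a geometric series.
theorem sum_inv_norm_pow_le_of_norm_lt {k : ℕ} (hk : finrank ℝ E < k) (hΔ : 0 < Δ) (K : ℕ)
    {ρ : ℝ} (hρ : 0 < ρ) (hle : ∀ i ∈ s, ρ ≤ ‖u i‖) (hlt : ∀ i ∈ s, ‖u i‖ < 2 ^ K * ρ)
    (hsep : (s : Set ι).Pairwise fun i j => Δ ≤ ‖u i - u j‖) :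
    ∑ i ∈ s, (1 / ‖u i‖) ^ k ≤
      (1 - 2 ^ finrank ℝ E / 2 ^ k)⁻¹ * ((1 + 4 * ρ / Δ) ^ finrank ℝ E * (1 / ρ) ^ k) := by
  set d := finrank ℝ E
  have hratio : (2 : ℝ) ^ d / 2 ^ k < 1 :=
    (div_lt_one (by positivity)).2 (pow_lt_pow_right₀ one_lt_two hk)
  have hpos : 0 < 1 - (2 : ℝ) ^ d / 2 ^ k := sub_pos.2 hratio
  induction K generalizing s ρ with
  | zero =>
    have hs : s = ∅ := Finset.eq_empty_of_forall_notMem fun i hi => by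
      linarith [hle i hi, hlt i hi]
    rw [hs, Finset.sum_empty]
    positivity
  | succ K ih =>
    have hinner : ∑ i ∈ s with ‖u i‖ < 2 * ρ, (1 / ‖u i‖) ^ k ≤
        (1 + 4 * ρ / Δ) ^ d * (1 / ρ) ^ k :=
      sum_filter_norm_lt_le_of_le hΔ hρ.le (by positivity)
        (fun i hi => by have := hle i hi; gcongr) hsep
    have houter := ih (s := s.filter fun i => ¬ ‖u i‖ < 2 * ρ) (ρ := 2 * ρ) (by positivity)
      (fun i hi => not_lt.1 (Finset.mem_filter.1 hi).2)
      (fun i hi => by have := hlt i (Finset.mem_filter.1 hi).1; rw [pow_succ] at this; linarith)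
      (hsep.mono (by exact_mod_cast Finset.filter_subset _ _))
    have hshell : (1 + 4 * (2 * ρ) / Δ) ^ d * (1 / (2 * ρ)) ^ k ≤
        2 ^ d / 2 ^ k * ((1 + 4 * ρ / Δ) ^ d * (1 / ρ) ^ k) :=
      calc (1 + 4 * (2 * ρ) / Δ) ^ d * (1 / (2 * ρ)) ^ k
          ≤ (2 * (1 + 4 * ρ / Δ)) ^ d * (1 / (2 * ρ)) ^ k := by
            gcongr
            rw [mul_add, mul_div_assoc, mul_div_assoc, mul_div_assoc]
            linarith
        _ = _ := by rw [mul_pow, ← one_div_mul_one_div, mul_pow, one_div_pow 2]; ring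
    rw [← Finset.sum_filter_add_sum_filter_not s fun i => ‖u i‖ < 2 * ρ]
    calc _ ≤ (1 + 4 * ρ / Δ) ^ d * (1 / ρ) ^ k + (1 - 2 ^ d / 2 ^ k)⁻¹ *
          (2 ^ d / 2 ^ k * ((1 + 4 * ρ / Δ) ^ d * (1 / ρ) ^ k)) :=
          add_le_add hinner (houter.trans (by gcongr))
      _ = _ := by
        generalize (1 + 4 * ρ / Δ) ^ d * (1 / ρ) ^ k = B
        generalize (2 : ℝ) ^ d / 2 ^ k = q at hpos
        field_simp [hpos.ne']
        ring

theorem sum_inv_norm_pow_le {k : ℕ} (hk : finrank ℝ E < k) (hΔ : 0 < Δ) {ρ : ℝ} (hρ : 0 < ρ)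
    (hle : ∀ i ∈ s, ρ ≤ ‖u i‖) (hsep : (s : Set ι).Pairwise fun i j => Δ ≤ ‖u i - u j‖) :
    ∑ i ∈ s, (1 / ‖u i‖) ^ k ≤
      (1 - 2 ^ finrank ℝ E / 2 ^ k)⁻¹ * ((1 + 4 * ρ / Δ) ^ finrank ℝ E * (1 / ρ) ^ k) := by
  obtain ⟨K, hK⟩ := pow_unbounded_of_one_lt ((∑ i ∈ s, ‖u i‖) / ρ) one_lt_two
  refine sum_inv_norm_pow_le_of_norm_lt hk hΔ K hρ hle (fun i hi => ?_) hsep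
  exact (Finset.single_le_sum (fun _ _ => norm_nonneg _) hi).trans_lt ((div_lt_iff₀ hρ).1 hK)

theorem sum_inv_pow_le_of_mul_norm_le {k : ℕ} (hk : finrank ℝ E < k) (hΔ : 0 < Δ)
    {y : ι → ℝ} {ρ y₀ c : ℝ} (hρ : 0 < ρ) (hy₀ : 0 < y₀) (hc : 0 < c)
    (hle : ∀ i ∈ s, ρ ≤ ‖u i‖) (hy : ∀ i ∈ s, y₀ ≤ y i) (hcy : ∀ i ∈ s, c * ‖u i‖ ≤ y i)
    (hsep : (s : Set ι).Pairwise fun i j => Δ ≤ ‖u i - u j‖) :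
    ∑ i ∈ s, (1 / y i) ^ k ≤ (1 + 4 * ρ / Δ) ^ finrank ℝ E * (1 / y₀) ^ k +
      (1 - 2 ^ finrank ℝ E / 2 ^ k)⁻¹ *
        ((1 + 8 * ρ / Δ) ^ finrank ℝ E * (1 / (2 * c * ρ)) ^ k) := by
  have hy_pos : ∀ i ∈ s, 0 < y i := fun i hi => hy₀.trans_le (hy i hi)
  have hinner : ∑ i ∈ s with ‖u i‖ < 2 * ρ, (1 / y i) ^ k ≤
      (1 + 4 * ρ / Δ) ^ finrank ℝ E * (1 / y₀) ^ k :=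
    sum_filter_norm_lt_le_of_le hΔ hρ.le (by positivity)
      (fun i hi => by have := hy i hi; have := hy_pos i hi; gcongr) hsep
  have houter := sum_inv_norm_pow_le (u := u) (s := s.filter fun i => ¬ ‖u i‖ < 2 * ρ)
    (ρ := 2 * ρ) hk hΔ (by positivity) (fun i hi => not_lt.1 (Finset.mem_filter.1 hi).2)
    (hsep.mono (by exact_mod_cast Finset.filter_subset _ _))
  rw [← Finset.sum_filter_add_sum_filter_not s fun i => ‖u i‖ < 2 * ρ]
  refine add_le_add hinner ?_
  calc ∑ i ∈ s with ¬ ‖u i‖ < 2 * ρ, (1 / y i) ^ k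
      ≤ ∑ i ∈ s with ¬ ‖u i‖ < 2 * ρ, (1 / c) ^ k * (1 / ‖u i‖) ^ k := by
        refine Finset.sum_le_sum fun i hi => ?_
        have his := (Finset.mem_filter.1 hi).1
        have hui := hρ.trans_le (hle i his)
        have := hy_pos i his
        have := hcy i his
        rw [← mul_pow, one_div_mul_one_div]
        gcongr
    _ = (1 / c) ^ k * ∑ i ∈ s with ¬ ‖u i‖ < 2 * ρ, (1 / ‖u i‖) ^ k := by rw [Finset.mul_sum]
    _ ≤ _ := mul_le_mul_of_nonneg_left houter (by positivity)
    _ = _ := by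
      rw [show 1 / (2 * c * ρ) = 1 / c * (1 / (2 * ρ)) by field_simp, mul_pow]
      ring

end Packing

section Geometry

open Module Set
open scoped Real

theorem antitoneOn_sin_div_self : AntitoneOn (fun x : ℝ => Real.sin x / x) (Ioc 0 π) := by
  have h := strictConcaveOn_sin_Icc.concaveOn.slope_anti (left_mem_Icc.2 Real.pi_pos.le)
  refine (h.mono fun x hx => ⟨Ioc_subset_Icc_self hx, hx.1.ne'⟩).congr fun x _ => ?_
  simp [slope_def_field]

theorem convexOn_cos_sqrt : ConvexOn ℝ (Icc 0 (π ^ 2)) fun t : ℝ => Real.cos √t := by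
  have hderiv : ∀ t ∈ Ioo 0 (π ^ 2),
      HasDerivAt (fun t : ℝ => Real.cos √t) (-(Real.sin √t / √t) / 2) t := fun t ht => by
    refine ((Real.hasDerivAt_cos _).comp t (Real.hasDerivAt_sqrt ht.1.ne')).congr_deriv ?_
    ring
  have hsqrt : ∀ t ∈ Ioo 0 (π ^ 2), √t ∈ Ioc 0 π := fun t ht =>
    ⟨Real.sqrt_pos.2 ht.1, (Real.sqrt_le_left Real.pi_pos.le).2 ht.2.le⟩
  refine MonotoneOn.convexOn_of_deriv (convex_Icc _ _) (by fun_prop) ?_ ?_ <;>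
    rw [interior_Icc]
  · exact fun t ht => (hderiv t ht).differentiableAt.differentiableWithinAt
  · intro t ht t' ht' htt'
    rw [(hderiv t ht).deriv, (hderiv t' ht').deriv]
    linarith [antitoneOn_sin_div_self (hsqrt t ht) (hsqrt t' ht') (Real.sqrt_le_sqrt htt')]

-- The left side is the Euclidean and the right side the spherical law of cosines; both are
-- averages, of `(a ∓ b) ^ 2` and of `cos (a ∓ b)`, with weights `(1 ± k) / 2`.
theorem cos_sqrt_le_cos_mul_cos_add_sin_mul_sin_mul {a b k : ℝ} (ha : a ∈ Icc 0 (π / 2))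
    (hb : b ∈ Icc 0 (π / 2)) (hk : k ∈ Icc (-1) 1) :
    Real.cos √(a ^ 2 + b ^ 2 - 2 * a * b * k) ≤
      Real.cos a * Real.cos b + Real.sin a * Real.sin b * k := by
  obtain ⟨ha₀, ha⟩ := ha
  obtain ⟨hb₀, hb⟩ := hb
  have h := convexOn_cos_sqrt.2 (⟨sq_nonneg _, by nlinarith⟩ : (a - b) ^ 2 ∈ Icc 0 (π ^ 2))
    (⟨sq_nonneg _, by nlinarith⟩ : (a + b) ^ 2 ∈ Icc 0 (π ^ 2))
    (by linarith [hk.1] : 0 ≤ (1 + k) / 2) (by linarith [hk.2] : 0 ≤ (1 - k) / 2) (by ring)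
  simp only [smul_eq_mul, Real.sqrt_sq_eq_abs, Real.cos_abs, Real.cos_add, Real.cos_sub] at h
  calc _ = Real.cos √((1 + k) / 2 * (a - b) ^ 2 + (1 - k) / 2 * (a + b) ^ 2) := by ring_nf
    _ ≤ _ := h
    _ = _ := by ring

variable {E : Type*} [NormedAddCommGroup E] [InnerProductSpace ℝ E] {p q r n n' : E}

/-- For unit vectors `p` and `q`, the angle in `[0, π / 2]` between the lines they span. -/
noncomputable def lineAngle (p q : E) : ℝ := Real.arccos |inner ℝ p q|

/-- The unit-speed great circle of the unit sphere that starts at `p` in the direction `n`, where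
`p` and `n` are orthonormal. Its velocity at time `t` is `greatCircle n (-p) t`. -/
noncomputable def greatCircle (p n : E) (t : ℝ) : E := Real.cos t • p + Real.sin t • n

@[simp] theorem greatCircle_zero : greatCircle p n 0 = p := by simp [greatCircle]

theorem inner_greatCircle_greatCircle (hp : ‖p‖ = 1) (hn : inner ℝ p n = 0)
    (hn' : inner ℝ p n' = 0) (a b : ℝ) : inner ℝ (greatCircle p n a) (greatCircle p n' b) =
      Real.cos a * Real.cos b + Real.sin a * Real.sin b * inner ℝ n n' := by
  simp only [greatCircle, inner_add_left, inner_add_right, real_inner_smul_left,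
    real_inner_smul_right, real_inner_self_eq_norm_sq, hp, hn', real_inner_comm p n ▸ hn]
  ring

theorem norm_greatCircle (hp : ‖p‖ = 1) (hn : ‖n‖ = 1) (hpn : inner ℝ p n = 0) (t : ℝ) :
    ‖greatCircle p n t‖ = 1 := by
  have h := inner_greatCircle_greatCircle hp hpn hpn t t
  rw [real_inner_self_eq_norm_sq, real_inner_self_eq_norm_sq, hn] at h
  exact (sq_eq_sq₀ (norm_nonneg _) zero_le_one).1 (by linarith [Real.sin_sq_add_cos_sq t])

theorem lineAngle_comm (p q : E) : lineAngle p q = lineAngle q p := by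
  rw [lineAngle, lineAngle, real_inner_comm]

@[simp] theorem lineAngle_neg_right (p q : E) : lineAngle p (-q) = lineAngle p q := by
  rw [lineAngle, lineAngle, inner_neg_right, abs_neg]

@[simp] theorem lineAngle_neg_left (p q : E) : lineAngle (-p) q = lineAngle p q := by
  rw [lineAngle_comm, lineAngle_neg_right, lineAngle_comm]

theorem lineAngle_nonneg (p q : E) : 0 ≤ lineAngle p q := Real.arccos_nonneg _

theorem lineAngle_le_pi_div_two (p q : E) : lineAngle p q ≤ π / 2 :=
  Real.arccos_le_pi_div_two.2 (abs_nonneg _)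

theorem abs_inner_le_one_of_norm_eq_one (hp : ‖p‖ = 1) (hq : ‖q‖ = 1) : |inner ℝ p q| ≤ 1 := by
  simpa only [hp, hq, mul_one] using abs_real_inner_le_norm p q

theorem cos_lineAngle (hp : ‖p‖ = 1) (hq : ‖q‖ = 1) :
    Real.cos (lineAngle p q) = |inner ℝ p q| :=
  Real.cos_arccos (by linarith [abs_nonneg (inner ℝ p q)])
    (abs_inner_le_one_of_norm_eq_one hp hq)

theorem sin_lineAngle (p q : E) : Real.sin (lineAngle p q) = √(1 - inner ℝ p q ^ 2) := by
  rw [lineAngle, Real.sin_arccos, sq_abs]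

theorem lineAngle_le_angle (hp : ‖p‖ = 1) (hq : ‖q‖ = 1) :
    lineAngle p q ≤ InnerProductGeometry.angle p q := by
  rw [lineAngle, InnerProductGeometry.angle, hp, hq, mul_one, div_one]
  exact Real.antitone_arccos (le_abs_self _)

theorem lineAngle_eq_angle_or_neg (hp : ‖p‖ = 1) (hq : ‖q‖ = 1) :
    lineAngle p q = InnerProductGeometry.angle p q ∨
      lineAngle p q = InnerProductGeometry.angle p (-q) := by
  simp only [lineAngle, InnerProductGeometry.angle, norm_neg, inner_neg_right, hp, hq, mul_one,
    div_one]
  rcases abs_choice (inner ℝ p q) with h | h <;> simp [h]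

theorem lineAngle_triangle (hp : ‖p‖ = 1) (hq : ‖q‖ = 1) (hr : ‖r‖ = 1) :
    lineAngle p r ≤ lineAngle p q + lineAngle q r := by
  obtain ⟨p', hp', hpr, hpq⟩ : ∃ p' : E, ‖p'‖ = 1 ∧ lineAngle p' r = lineAngle p r ∧
      lineAngle p q = InnerProductGeometry.angle p' q := by
    rcases lineAngle_eq_angle_or_neg hq hp with h | h
    · exact ⟨p, hp, rfl, by rw [lineAngle_comm, h, InnerProductGeometry.angle_comm]⟩
    · exact ⟨-p, by rwa [norm_neg], lineAngle_neg_left _ _,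
        by rw [lineAngle_comm, h, InnerProductGeometry.angle_comm]⟩
  obtain ⟨r', hr', hpr', hqr⟩ : ∃ r' : E, ‖r'‖ = 1 ∧ lineAngle p' r' = lineAngle p' r ∧
      lineAngle q r = InnerProductGeometry.angle q r' := by
    rcases lineAngle_eq_angle_or_neg hq hr with h | h
    · exact ⟨r, hr, rfl, h⟩
    · exact ⟨-r, by rwa [norm_neg], lineAngle_neg_right _ _, h⟩
  rw [← hpr, ← hpr', hpq, hqr]
  exact (lineAngle_le_angle hp' hr').trans (InnerProductGeometry.angle_le_angle_add_angle _ _ _)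

theorem exists_greatCircle_lineAngle_eq (hp : ‖p‖ = 1) (hq : ‖q‖ = 1) (hpq : 0 < lineAngle p q) :
    ∃ n : E, ‖n‖ = 1 ∧ inner ℝ p n = 0 ∧
      (greatCircle p n (lineAngle p q) = q ∨ greatCircle p n (lineAngle p q) = -q) := by
  wlog hnonneg : 0 ≤ inner ℝ p q generalizing q
  · obtain ⟨n, hn, hpn, h⟩ := this (q := -q) (by rwa [norm_neg]) (by rwa [lineAngle_neg_right])
      (by rw [inner_neg_right]; linarith)
    rw [lineAngle_neg_right, neg_neg] at h
    exact ⟨n, hn, hpn, h.symm⟩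
  have hsin : 0 < Real.sin (lineAngle p q) :=
    Real.sin_pos_of_pos_of_lt_pi hpq (by linarith [lineAngle_le_pi_div_two p q, Real.pi_pos])
  have hcos : Real.cos (lineAngle p q) = inner ℝ p q := by
    rw [cos_lineAngle hp hq, abs_of_nonneg hnonneg]
  have hnorm : ‖q - Real.cos (lineAngle p q) • p‖ = Real.sin (lineAngle p q) := by
    rw [← sq_eq_sq₀ (norm_nonneg _) hsin.le, norm_sub_sq_real, real_inner_smul_right, norm_smul,
      hp, hq, real_inner_comm, ← hcos, Real.norm_eq_abs, mul_pow, sq_abs]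
    linarith [Real.sin_sq_add_cos_sq (lineAngle p q)]
  refine ⟨(Real.sin (lineAngle p q))⁻¹ • (q - Real.cos (lineAngle p q) • p), ?_, ?_, Or.inl ?_⟩
  · rw [norm_smul, hnorm, norm_inv, Real.norm_eq_abs, abs_of_pos hsin, inv_mul_cancel₀ hsin.ne']
  · rw [real_inner_smul_right, inner_sub_right, real_inner_smul_right,
      real_inner_self_eq_norm_sq, hp, hcos]
    ring
  · rw [greatCircle, smul_inv_smul₀ hsin.ne', add_sub_cancel]

-- In normal coordinates at `p` the sphere is no larger than its tangent space.
theorem lineAngle_greatCircle_le_norm_sub (hp : ‖p‖ = 1) (hn : ‖n‖ = 1) (hn' : ‖n'‖ = 1)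
    (hpn : inner ℝ p n = 0) (hpn' : inner ℝ p n' = 0) {a b : ℝ} (ha : a ∈ Icc 0 (π / 2))
    (hb : b ∈ Icc 0 (π / 2)) :
    lineAngle (greatCircle p n a) (greatCircle p n' b) ≤ ‖a • n - b • n'‖ := by
  have hk := abs_le.1 (abs_inner_le_one_of_norm_eq_one hn hn')
  have hnorm : ‖a • n - b • n'‖ = √(a ^ 2 + b ^ 2 - 2 * a * b * inner ℝ n n') := by
    rw [← Real.sqrt_sq (norm_nonneg _), norm_sub_sq_real, real_inner_smul_left,
      real_inner_smul_right, norm_smul, norm_smul, hn, hn', mul_one, mul_one, Real.norm_eq_abs,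
      Real.norm_eq_abs, sq_abs, sq_abs]
    ring_nf
  rcases le_total π ‖a • n - b • n'‖ with h | h
  · exact (Real.arccos_le_pi _).trans h
  · rw [← Real.arccos_cos (norm_nonneg _) h, hnorm]
    refine Real.antitone_arccos ((cos_sqrt_le_cos_mul_cos_add_sin_mul_sin_mul ha hb hk).trans ?_)
    exact inner_greatCircle_greatCircle hp hpn hpn' a b ▸ le_abs_self _

variable {ι : Type*} {s : Finset ι} {x : ι → E}

theorem exists_norm_eq_lineAngle_and_lineAngle_le_norm_sub (hp : ‖p‖ = 1)
    (hx : ∀ i ∈ s, ‖x i‖ = 1) (hpos : ∀ i ∈ s, 0 < lineAngle p (x i)) :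
    ∃ u : ι → (ℝ ∙ p)ᗮ, (∀ i ∈ s, ‖u i‖ = lineAngle p (x i)) ∧
      ∀ i ∈ s, ∀ j ∈ s, lineAngle (x i) (x j) ≤ ‖u i - u j‖ := by
  have hθ : ∀ i, lineAngle p (x i) ∈ Icc 0 (π / 2) := fun i =>
    ⟨lineAngle_nonneg _ _, lineAngle_le_pi_div_two _ _⟩
  have hlog : ∀ i, ∃ n : (ℝ ∙ p)ᗮ, i ∈ s → ‖(n : E)‖ = 1 ∧
      (greatCircle p (n : E) (lineAngle p (x i)) = x i ∨
        greatCircle p (n : E) (lineAngle p (x i)) = -x i) := fun i => by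
    by_cases hi : i ∈ s
    · obtain ⟨n, hn, hpn, h⟩ := exists_greatCircle_lineAngle_eq hp (hx i hi) (hpos i hi)
      exact ⟨⟨n, Submodule.mem_orthogonal_singleton_iff_inner_right.2 hpn⟩, fun _ => ⟨hn, h⟩⟩
    · exact ⟨0, fun h => absurd h hi⟩
  choose n hn hgc using hlog
  have hpn : ∀ i, inner ℝ p (n i : E) = 0 := fun i =>
    Submodule.mem_orthogonal_singleton_iff_inner_right.1 (n i).2
  refine ⟨fun i => lineAngle p (x i) • n i, fun i hi => ?_, fun i hi j hj => ?_⟩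
  · rw [norm_smul, Submodule.coe_norm, hn i hi, mul_one, Real.norm_eq_abs,
      abs_of_nonneg (hθ i).1]
  · refine le_of_eq_of_le ?_ (lineAngle_greatCircle_le_norm_sub hp (hn i hi) (hn j hj) (hpn i)
      (hpn j) (hθ i) (hθ j))
    rcases hgc i hi with hi | hi <;> rcases hgc j hj with hj | hj <;> rw [hi, hj] <;> simp

theorem sum_inv_sin_lineAngle_pow_le [FiniteDimensional ℝ E] {d k : ℕ}
    (hd : finrank ℝ E = d + 1) (hk : d < k) (hp : ‖p‖ = 1)
    (hx : ∀ i ∈ s, ‖x i‖ = 1) {Δ ρ : ℝ} (hΔ : 0 < Δ) (hρ : ρ ∈ Ioc 0 (π / 2))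
    (hsep : (s : Set ι).Pairwise fun i j => Δ ≤ lineAngle (x i) (x j))
    (hfar : ∀ i ∈ s, ρ ≤ lineAngle p (x i)) :
    ∑ i ∈ s, (1 / Real.sin (lineAngle p (x i))) ^ k ≤
      (1 + 4 * ρ / Δ) ^ d * (1 / Real.sin ρ) ^ k +
        (1 - 2 ^ d / 2 ^ k)⁻¹ * ((1 + 8 * ρ / Δ) ^ d * (π / (4 * ρ)) ^ k) := by
  have hp₀ : p ≠ 0 := norm_ne_zero_iff.1 (by rw [hp]; exact one_ne_zero)
  have hfr : finrank ℝ (ℝ ∙ p)ᗮ = d :=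
    haveI : Fact (finrank ℝ E = d + 1) := ⟨hd⟩
    Submodule.finrank_orthogonal_span_singleton hp₀
  obtain ⟨u, hnorm, hu⟩ := exists_norm_eq_lineAngle_and_lineAngle_le_norm_sub hp hx
    fun i hi => hρ.1.trans_le (hfar i hi)
  have hpack := sum_inv_pow_le_of_mul_norm_le (u := u) (hfr.trans_lt hk) hΔ
    (y := fun i => Real.sin (lineAngle p (x i))) (c := 2 / π) (y₀ := Real.sin ρ)
    hρ.1 (Real.sin_pos_of_pos_of_lt_pi hρ.1 (by linarith [hρ.2, Real.pi_pos])) (by positivity)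
    (fun i hi => (hfar i hi).trans_eq (hnorm i hi).symm)
    (fun i hi => Real.sin_le_sin_of_le_of_le_pi_div_two (by linarith [hρ.1, Real.pi_pos])
      (lineAngle_le_pi_div_two _ _) (hfar i hi))
    (fun i hi => (hnorm i hi).symm ▸
      Real.mul_le_sin (lineAngle_nonneg _ _) (lineAngle_le_pi_div_two _ _))
    (fun i hi j hj hij => (hsep hi hj hij).trans (hu i hi j hj))
  rwa [hfr, show 1 / (2 * (2 / π) * ρ) = π / (4 * ρ) by field_simp; norm_num] at hpack

end Geometry

section Kernel

open Polynomial Set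
open scoped Real

theorem sub_cube_div_le_mul_sin {m r θ : ℝ} (hm : 5 ≤ m) (hr : 0 ≤ r) (hrθ : r ≤ m * θ)
    (hθ : θ ≤ π / 2) : r - r ^ 3 / 150 ≤ m * Real.sin θ := by
  have hm₀ : 0 < m := by linarith
  have hsin : r / m - (r / m) ^ 3 / 6 ≤ Real.sin θ :=
    (Real.sin_ge_sub_cube (by positivity)).trans <|
      Real.sin_le_sin_of_le_of_le_pi_div_two
        (by have : 0 ≤ r / m := by positivity
            linarith [Real.pi_pos]) hθ ((div_le_iff₀' hm₀).2 hrθ)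
  calc r - r ^ 3 / 150 ≤ r - r ^ 3 / (6 * m ^ 2) := by gcongr; nlinarith
    _ = m * (r / m - (r / m) ^ 3 / 6) := by field_simp
    _ ≤ m * Real.sin θ := by gcongr

theorem cos_le_one_sub_sq_add_pow_four {x : ℝ} (hx : x ∈ Icc 0 4) :
    Real.cos x ≤ 1 - x ^ 2 / 2 + x ^ 4 / 24 := by
  obtain ⟨hx₀, hx₄⟩ := hx
  have hhalf : 0 ≤ x / 2 - (x / 2) ^ 3 / 6 := by
    rw [show x / 2 - (x / 2) ^ 3 / 6 = x / 2 * (1 - x ^ 2 / 24) by ring]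
    exact mul_nonneg (by linarith) (by nlinarith)
  have hsq := pow_le_pow_left₀ hhalf (Real.sin_ge_sub_cube (x := x / 2) (by linarith)) 2
  rw [show Real.cos x = 1 - 2 * Real.sin (x / 2) ^ 2 by
    rw [Real.sin_sq_eq_half_sub]; ring_nf]
  nlinarith [pow_nonneg hx₀ 6]

theorem sin_le_sub_cube_add_pow_five {x : ℝ} (hx : x ∈ Icc 0 4) :
    Real.sin x ≤ x - x ^ 3 / 6 + x ^ 5 / 120 := by
  have hderiv : ∀ y : ℝ, HasDerivAt (fun y => y - y ^ 3 / 6 + y ^ 5 / 120)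
      (1 - y ^ 2 / 2 + y ^ 4 / 24) y := fun y => by
    refine HasDerivAt.congr_deriv (((hasDerivAt_id y).sub ((hasDerivAt_pow 3 y).div_const 6)).add
      ((hasDerivAt_pow 5 y).div_const 120)) ?_
    norm_num
    ring
  exact image_le_of_deriv_right_le_deriv_boundary Real.continuousOn_sin
    (fun y _ => (Real.hasDerivAt_sin y).hasDerivWithinAt) (by simp)
    (fun y _ => (hderiv y).continuousAt.continuousWithinAt)
    (fun y _ => (hderiv y).hasDerivWithinAt)
    (fun y hy => cos_le_one_sub_sq_add_pow_four (Ico_subset_Icc_self hy)) hx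

/-- The Chebyshev polynomial `Uₙ` normalised to take the value `1` at `1`. At `cos θ` it is
`sin ((n + 1) θ) / ((n + 1) sin θ)`, the normalised Dirichlet kernel. -/
noncomputable def chebyshevKernel (n : ℕ) : ℝ[X] := C (1 / ((n : ℝ) + 1)) * Chebyshev.U ℝ n

/-- The eighth power of the normalised Dirichlet kernel, a kernel of Jackson type. The power is
even, so that `jacksonKernel n` is well defined on lines, and large enough for its translates
over a separated set in dimension three to be summable independently of `n`. -/
noncomputable def jacksonKernel (n : ℕ) : ℝ[X] := chebyshevKernel n ^ 8

variable {n : ℕ}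

theorem eval_chebyshevKernel (t : ℝ) :
    (chebyshevKernel n).eval t = (Chebyshev.U ℝ n).eval t / ((n : ℝ) + 1) := by
  simp [chebyshevKernel, div_eq_inv_mul]

theorem eval_one_jacksonKernel : (jacksonKernel n).eval 1 = 1 := by
  have : (n : ℝ) + 1 ≠ 0 := by positivity
  simp [jacksonKernel, eval_chebyshevKernel, this]

theorem eval_neg_jacksonKernel (t : ℝ) :
    (jacksonKernel n).eval (-t) = (jacksonKernel n).eval t := by
  simp only [jacksonKernel, eval_pow, eval_chebyshevKernel, Chebyshev.U_eval_neg]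
  rcases Int.even_or_odd (n : ℤ) with h | h
  · simp [Int.negOnePow_even _ h]
  · simp [Int.negOnePow_odd _ h, neg_div, Even.neg_pow (by decide : Even 8)]

theorem eval_abs_jacksonKernel (t : ℝ) :
    (jacksonKernel n).eval |t| = (jacksonKernel n).eval t := by
  rcases abs_choice t with h | h <;> rw [h]
  exact eval_neg_jacksonKernel t

theorem eval_cos_chebyshevKernel_mul (θ : ℝ) :
    (chebyshevKernel n).eval (Real.cos θ) * (((n : ℝ) + 1) * Real.sin θ) =
      Real.sin (((n : ℝ) + 1) * θ) := by
  have h := Chebyshev.U_real_cos θ n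
  have hn : (n : ℝ) + 1 ≠ 0 := by positivity
  push_cast at h
  rw [← h, eval_chebyshevKernel]
  field_simp

theorem one_sub_sq_mul_eval_derivative_chebyshevKernel (t : ℝ) :
    (1 - t ^ 2) * (derivative (chebyshevKernel n)).eval t =
      t * (chebyshevKernel n).eval t - (Chebyshev.T ℝ ((n : ℤ) + 1)).eval t := by
  have h := congrArg (Polynomial.eval t) (Chebyshev.add_one_mul_T_eq_poly_in_U (R := ℝ) n)
  have hn : (n : ℝ) + 1 ≠ 0 := by positivity
  simp only [chebyshevKernel, eval_mul, eval_sub, eval_add, eval_one, eval_X, eval_C, eval_pow,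
    derivative_C_mul, eval_natCast, Int.cast_natCast] at h ⊢
  field_simp
  linear_combination h

theorem one_sub_sq_mul_eval_derivative_derivative_chebyshevKernel (t : ℝ) :
    (1 - t ^ 2) * (derivative (derivative (chebyshevKernel n))).eval t =
      3 * t * (derivative (chebyshevKernel n)).eval t -
        (((n : ℝ) + 1) ^ 2 - 1) * (chebyshevKernel n).eval t := by
  have h := congrArg (Polynomial.eval t)
    (Chebyshev.one_sub_X_sq_mul_derivative_derivative_U_eq_poly_in_U (R := ℝ) n)
  have hn : (n : ℝ) + 1 ≠ 0 := by positivity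
  simp at h
  simp only [chebyshevKernel, eval_mul, eval_C, derivative_C_mul]
  field_simp
  linear_combination h

section Decay

variable {τ τ' u : ℝ}

theorem abs_eval_chebyshevKernel_le (hτ : |τ| ≤ 1) (hu : ((n : ℝ) + 1) * √(1 - τ ^ 2) * u = 1) :
    |(chebyshevKernel n).eval τ| ≤ u := by
  have h := eval_cos_chebyshevKernel_mul (n := n) (Real.arccos τ)
  rw [Real.cos_arccos (abs_le.1 hτ).1 (abs_le.1 hτ).2, Real.sin_arccos] at h
  have hy : 0 < ((n : ℝ) + 1) * √(1 - τ ^ 2) :=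
    lt_of_le_of_ne (by positivity) (left_ne_zero_of_mul_eq_one hu).symm
  refine le_of_mul_le_mul_left ?_ hy
  rw [hu, ← abs_of_pos hy, ← abs_mul, mul_comm, h]
  exact Real.abs_sin_le_one _

theorem abs_eval_derivative_chebyshevKernel_le (hτ : |τ| ≤ 1)
    (hu : ((n : ℝ) + 1) * √(1 - τ ^ 2) * u = 1) :
    |(derivative (chebyshevKernel n)).eval τ| ≤ ((n : ℝ) + 1) ^ 2 * (u ^ 2 * (1 + u)) := by
  have hsq : 0 ≤ 1 - τ ^ 2 := by linarith [(sq_le_one_iff_abs_le_one τ).2 hτ]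
  have hscale : ((n : ℝ) + 1) ^ 2 * u ^ 2 * (1 - τ ^ 2) = 1 := by
    calc _ = (((n : ℝ) + 1) * √(1 - τ ^ 2) * u) ^ 2 := by
          rw [mul_pow, mul_pow, Real.sq_sqrt hsq]; ring
      _ = 1 := by rw [hu, one_pow]
  have hK := abs_eval_chebyshevKernel_le hτ hu
  have hT := Chebyshev.abs_eval_T_real_le_one ((n : ℤ) + 1) hτ
  have hmul : (1 - τ ^ 2) * |(derivative (chebyshevKernel n)).eval τ| ≤ 1 + u := by
    rw [← abs_of_nonneg hsq, ← abs_mul, one_sub_sq_mul_eval_derivative_chebyshevKernel]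
    calc _ ≤ |τ * (chebyshevKernel n).eval τ| + |(Chebyshev.T ℝ ((n : ℤ) + 1)).eval τ| :=
          abs_sub _ _
      _ ≤ 1 * u + 1 := by rw [abs_mul]; gcongr
      _ = 1 + u := by ring
  calc |(derivative (chebyshevKernel n)).eval τ|
      = ((n : ℝ) + 1) ^ 2 * u ^ 2 *
          ((1 - τ ^ 2) * |(derivative (chebyshevKernel n)).eval τ|) := by
        rw [← mul_assoc, hscale, one_mul]
    _ ≤ ((n : ℝ) + 1) ^ 2 * u ^ 2 * (1 + u) := by gcongr
    _ = _ := by ring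

theorem abs_le_one_of_sq_add_sq_le_one (hτ : τ ^ 2 + τ' ^ 2 ≤ 1) : |τ| ≤ 1 :=
  (sq_le_one_iff_abs_le_one τ).1 (by linarith [sq_nonneg τ'])

theorem abs_eval_derivative_chebyshevKernel_mul_le (hτ : τ ^ 2 + τ' ^ 2 ≤ 1)
    (hu : ((n : ℝ) + 1) * √(1 - τ ^ 2) * u = 1) :
    |(derivative (chebyshevKernel n)).eval τ * τ'| ≤ ((n : ℝ) + 1) * (u * (1 + u)) := by
  have hτ₁ := abs_le_one_of_sq_add_sq_le_one hτ
  have hτ' : |τ'| ≤ √(1 - τ ^ 2) := Real.abs_le_sqrt (by linarith)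
  have hK' := abs_eval_derivative_chebyshevKernel_le hτ₁ hu
  have hu₀ := (abs_nonneg _).trans (abs_eval_chebyshevKernel_le hτ₁ hu)
  calc _ ≤ ((n : ℝ) + 1) ^ 2 * (u ^ 2 * (1 + u)) * √(1 - τ ^ 2) := by rw [abs_mul]; gcongr
    _ = ((n : ℝ) + 1) * (u * (1 + u)) * (((n : ℝ) + 1) * √(1 - τ ^ 2) * u) := by ring
    _ = _ := by rw [hu, mul_one]

theorem abs_eval_derivative_derivative_chebyshevKernel_mul_sub_le (hτ : τ ^ 2 + τ' ^ 2 ≤ 1)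
    (hu : ((n : ℝ) + 1) * √(1 - τ ^ 2) * u = 1) :
    |(derivative (derivative (chebyshevKernel n))).eval τ * τ' ^ 2 -
      (derivative (chebyshevKernel n)).eval τ * τ| ≤
        ((n : ℝ) + 1) ^ 2 * (u + 4 * (1 + u) * u ^ 2) := by
  have hτ₁ := abs_le_one_of_sq_add_sq_le_one hτ
  have hK := abs_eval_chebyshevKernel_le hτ₁ hu
  have hK' := abs_eval_derivative_chebyshevKernel_le hτ₁ hu
  have hode := one_sub_sq_mul_eval_derivative_derivative_chebyshevKernel (n := n) τ
  generalize (chebyshevKernel n).eval τ = K at *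
  generalize (derivative (chebyshevKernel n)).eval τ = K' at *
  generalize (derivative (derivative (chebyshevKernel n))).eval τ = K'' at *
  have hm : 0 ≤ ((n : ℝ) + 1) ^ 2 - 1 := by nlinarith [n.cast_nonneg (α := ℝ)]
  have hK'' : |K''| * τ' ^ 2 ≤ 3 * |K'| + (((n : ℝ) + 1) ^ 2 - 1) * |K| :=
    calc |K''| * τ' ^ 2 ≤ |K''| * (1 - τ ^ 2) := by gcongr; linarith
      _ = |3 * τ * K' - (((n : ℝ) + 1) ^ 2 - 1) * K| := by
        rw [← hode, abs_mul, abs_of_nonneg (a := 1 - τ ^ 2) (by linarith [sq_nonneg τ']),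
          mul_comm]
      _ ≤ 3 * |τ| * |K'| + (((n : ℝ) + 1) ^ 2 - 1) * |K| := by
        refine (abs_sub _ _).trans_eq ?_
        rw [abs_mul, abs_mul, abs_mul, abs_of_nonneg hm, abs_of_pos (three_pos (α := ℝ))]
      _ ≤ 3 * 1 * |K'| + (((n : ℝ) + 1) ^ 2 - 1) * |K| := by gcongr
      _ = _ := by ring
  calc |K'' * τ' ^ 2 - K' * τ| ≤ |K''| * τ' ^ 2 + |K'| * |τ| := by
        refine (abs_sub _ _).trans_eq ?_
        rw [abs_mul, abs_mul, abs_of_nonneg (sq_nonneg τ')]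
    _ ≤ (3 * |K'| + (((n : ℝ) + 1) ^ 2 - 1) * |K|) + |K'| * 1 := by gcongr
    _ ≤ 4 * |K'| + ((n : ℝ) + 1) ^ 2 * |K| := by linarith [abs_nonneg K]
    _ ≤ 4 * (((n : ℝ) + 1) ^ 2 * (u ^ 2 * (1 + u))) + ((n : ℝ) + 1) ^ 2 * u := by gcongr
    _ = _ := by ring

theorem abs_eval_jacksonKernel_le (hτ : |τ| ≤ 1) (hu : ((n : ℝ) + 1) * √(1 - τ ^ 2) * u = 1) :
    |(jacksonKernel n).eval τ| ≤ u ^ 8 := by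
  rw [jacksonKernel, eval_pow, abs_pow]
  exact pow_le_pow_left₀ (abs_nonneg _) (abs_eval_chebyshevKernel_le hτ hu) 8

theorem derivative_jacksonKernel :
    derivative (jacksonKernel n) = 8 * chebyshevKernel n ^ 7 * derivative (chebyshevKernel n) := by
  simp [jacksonKernel, derivative_pow, map_ofNat]

theorem derivative_derivative_jacksonKernel :
    derivative (derivative (jacksonKernel n)) =
      56 * chebyshevKernel n ^ 6 * derivative (chebyshevKernel n) ^ 2 +
        8 * chebyshevKernel n ^ 7 * derivative (derivative (chebyshevKernel n)) := by
  rw [derivative_jacksonKernel]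
  simp [derivative_pow, map_ofNat]
  ring

theorem abs_eval_derivative_jacksonKernel_mul_le (hτ : τ ^ 2 + τ' ^ 2 ≤ 1)
    (hu : ((n : ℝ) + 1) * √(1 - τ ^ 2) * u = 1) :
    |(derivative (jacksonKernel n)).eval τ * τ'| ≤ 8 * ((n : ℝ) + 1) * u ^ 8 * (1 + u) := by
  have hK := abs_eval_chebyshevKernel_le (abs_le_one_of_sq_add_sq_le_one hτ) hu
  have hK' := abs_eval_derivative_chebyshevKernel_mul_le hτ hu
  have hu₀ := (abs_nonneg _).trans hK
  simp only [derivative_jacksonKernel, eval_mul, eval_pow, eval_ofNat]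
  calc _ = 8 * |(chebyshevKernel n).eval τ| ^ 7 *
        |(derivative (chebyshevKernel n)).eval τ * τ'| := by
        rw [mul_assoc, abs_mul, abs_mul, abs_pow, abs_of_pos (by norm_num : (0 : ℝ) < 8)]
    _ ≤ 8 * u ^ 7 * (((n : ℝ) + 1) * (u * (1 + u))) := by gcongr
    _ = _ := by ring

theorem abs_eval_derivative_derivative_jacksonKernel_mul_sub_le (hτ : τ ^ 2 + τ' ^ 2 ≤ 1)
    (hu : ((n : ℝ) + 1) * √(1 - τ ^ 2) * u = 1) :
    |(derivative (derivative (jacksonKernel n))).eval τ * τ' ^ 2 -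
      (derivative (jacksonKernel n)).eval τ * τ| ≤
        ((n : ℝ) + 1) ^ 2 * u ^ 8 * (56 * (1 + u) ^ 2 + 8 + 32 * (1 + u) * u) := by
  have hK := abs_eval_chebyshevKernel_le (abs_le_one_of_sq_add_sq_le_one hτ) hu
  have hK' := abs_eval_derivative_chebyshevKernel_mul_le hτ hu
  have hK'' := abs_eval_derivative_derivative_chebyshevKernel_mul_sub_le hτ hu
  have hu₀ := (abs_nonneg _).trans hK
  rw [derivative_derivative_jacksonKernel, derivative_jacksonKernel]
  simp only [eval_mul, eval_add, eval_pow, eval_ofNat]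
  generalize (chebyshevKernel n).eval τ = K at *
  generalize (derivative (chebyshevKernel n)).eval τ = K' at *
  generalize (derivative (derivative (chebyshevKernel n))).eval τ = K'' at *
  calc _ = |56 * (K ^ 6 * (K' * τ') ^ 2) + 8 * (K ^ 7 * (K'' * τ' ^ 2 - K' * τ))| := by ring_nf
    _ ≤ |56 * (K ^ 6 * (K' * τ') ^ 2)| + |8 * (K ^ 7 * (K'' * τ' ^ 2 - K' * τ))| :=
        abs_add_le _ _
    _ = 56 * (|K| ^ 6 * |K' * τ'| ^ 2) + 8 * (|K| ^ 7 * |K'' * τ' ^ 2 - K' * τ|) := by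
        rw [abs_mul 56, abs_mul 8, abs_mul (K ^ 6), abs_mul (K ^ 7), abs_pow, abs_pow, abs_pow,
          abs_of_pos (by norm_num : (0 : ℝ) < 8), abs_of_pos (by norm_num : (0 : ℝ) < 56)]
    _ ≤ 56 * (u ^ 6 * (((n : ℝ) + 1) * (u * (1 + u))) ^ 2) +
          8 * (u ^ 7 * (((n : ℝ) + 1) ^ 2 * (u + 4 * (1 + u) * u ^ 2))) := by gcongr
    _ = _ := by ring

end Decay

section Peak

variable {θ : ℝ}

theorem one_sub_sq_div_six_le_eval_cos_chebyshevKernel (hθ : 0 < θ) (hθπ : θ < π)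
    (hY : ((n : ℝ) + 1) * θ ≤ 2) :
    1 - (((n : ℝ) + 1) * θ) ^ 2 / 6 ≤ (chebyshevKernel n).eval (Real.cos θ) := by
  have hY₀ : 0 < ((n : ℝ) + 1) * θ := by positivity
  have hsin : 0 < Real.sin θ := Real.sin_pos_of_pos_of_lt_pi hθ hθπ
  have hA : 0 ≤ 1 - (((n : ℝ) + 1) * θ) ^ 2 / 6 := by nlinarith
  refine le_of_mul_le_mul_right (a := ((n : ℝ) + 1) * Real.sin θ) ?_ (by positivity)
  rw [eval_cos_chebyshevKernel_mul]
  calc _ ≤ (1 - (((n : ℝ) + 1) * θ) ^ 2 / 6) * (((n : ℝ) + 1) * θ) := by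
        gcongr
        exact Real.sin_le hθ.le
    _ = ((n : ℝ) + 1) * θ - (((n : ℝ) + 1) * θ) ^ 3 / 6 := by ring
    _ ≤ _ := Real.sin_ge_sub_cube hY₀.le

theorem one_sub_sq_le_eval_cos_jacksonKernel (hθ : 0 < θ) (hθπ : θ < π)
    (hY : ((n : ℝ) + 1) * θ ≤ 2) :
    1 - 4 / 3 * (((n : ℝ) + 1) * θ) ^ 2 ≤ (jacksonKernel n).eval (Real.cos θ) := by
  have hK := one_sub_sq_div_six_le_eval_cos_chebyshevKernel hθ hθπ hY
  have hY₀ : 0 < ((n : ℝ) + 1) * θ := by positivity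
  have hbernoulli := one_add_mul_le_pow (a := (chebyshevKernel n).eval (Real.cos θ) - 1)
    (by nlinarith) 8
  rw [add_sub_cancel, Nat.cast_ofNat] at hbernoulli
  rw [jacksonKernel, eval_pow]
  linarith

theorem eval_cos_chebyshevKernel_mem_Icc (hn : 4 ≤ n) (hθ : 0 < θ)
    (hY : ((n : ℝ) + 1) * θ ≤ 11 / 10) :
    (chebyshevKernel n).eval (Real.cos θ) ∈
      Icc 0 (1 - 147 / 1000 * (((n : ℝ) + 1) * θ) ^ 2) := by
  have hm : (5 : ℝ) ≤ (n : ℝ) + 1 := by norm_cast; omega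
  have hθ₁ : θ ≤ 1 := by nlinarith
  have hY₀ : 0 < ((n : ℝ) + 1) * θ := by positivity
  have hsq : (((n : ℝ) + 1) * θ) ^ 2 ≤ 121 / 100 := by nlinarith
  have hnonneg : 0 ≤ (chebyshevKernel n).eval (Real.cos θ) :=
    le_trans (by linarith) (one_sub_sq_div_six_le_eval_cos_chebyshevKernel hθ
      (by linarith [Real.pi_gt_three]) (by linarith))
  have hsin := sub_cube_div_le_mul_sin hm hY₀.le le_rfl (by linarith [Real.pi_gt_three])
  have hsinY := sin_le_sub_cube_add_pow_five (x := ((n : ℝ) + 1) * θ) ⟨hY₀.le, by linarith⟩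
  rw [← eval_cos_chebyshevKernel_mul] at hsinY
  generalize (chebyshevKernel n).eval (Real.cos θ) = K at *
  generalize ((n : ℝ) + 1) * Real.sin θ = y at *
  generalize ((n : ℝ) + 1) * θ = Y at *
  refine ⟨hnonneg, le_of_mul_le_mul_right (a := Y - Y ^ 3 / 150) ?_ (by nlinarith)⟩
  calc K * (Y - Y ^ 3 / 150) ≤ K * y := by gcongr
    _ ≤ Y - Y ^ 3 / 6 + Y ^ 5 / 120 := hsinY
    _ ≤ _ := by nlinarith [pow_pos hY₀ 3, pow_pos hY₀ 5]

theorem eval_cos_jacksonKernel_mem_Icc (hn : 4 ≤ n) (hθ : 0 < θ)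
    (hY : ((n : ℝ) + 1) * θ ≤ 3 / 5) :
    (jacksonKernel n).eval (Real.cos θ) ∈ Icc 0 (1 - 9 / 10 * (((n : ℝ) + 1) * θ) ^ 2) := by
  obtain ⟨hK₀, hK⟩ := eval_cos_chebyshevKernel_mem_Icc hn hθ (by linarith)
  rw [jacksonKernel, eval_pow]
  refine ⟨by positivity, ?_⟩
  have hY₀ : 0 < ((n : ℝ) + 1) * θ := by positivity
  generalize (chebyshevKernel n).eval (Real.cos θ) = K at *
  obtain ⟨x, hx⟩ : ∃ x, (((n : ℝ) + 1) * θ) ^ 2 = x := ⟨_, rfl⟩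
  have hx₁ : x ≤ 9 / 25 := by rw [← hx]; nlinarith
  have hx₀ : 0 ≤ x := by rw [← hx]; positivity
  rw [hx] at hK ⊢
  have hK₂ : K ^ 2 ≤ 1 - 28 / 100 * x := by nlinarith
  have hK₄ : (K ^ 2) ^ 2 ≤ 1 - 53 / 100 * x := by nlinarith [sq_nonneg K]
  calc K ^ 8 = ((K ^ 2) ^ 2) ^ 2 := by ring
    _ ≤ 1 - 9 / 10 * x := by nlinarith [sq_nonneg (K ^ 2)]

theorem eval_cos_jacksonKernel_le_of_le (hn : 4 ≤ n) (hY₀ : 3 / 5 ≤ ((n : ℝ) + 1) * θ)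
    (hY : ((n : ℝ) + 1) * θ ≤ 11 / 10) :
    (jacksonKernel n).eval (Real.cos θ) ≤ 13 / 20 := by
  have hθ : 0 < θ := pos_of_mul_pos_right (by linarith) (by positivity : 0 ≤ (n : ℝ) + 1)
  obtain ⟨hK₀, hK⟩ := eval_cos_chebyshevKernel_mem_Icc hn hθ hY
  rw [jacksonKernel, eval_pow]
  calc _ ≤ (947081 / 1000000 : ℝ) ^ 8 := by gcongr; nlinarith
    _ ≤ 13 / 20 := by norm_num

end Peak

end Kernel

section Bump

open Polynomial Set Module
open scoped Real

variable {E : Type*} [NormedAddCommGroup E] [InnerProductSpace ℝ E]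

theorem inner_sq_add_inner_sq_le_one {e P N : E} (he : ‖e‖ = 1) (hP : ‖P‖ = 1) (hN : ‖N‖ = 1)
    (hPN : inner ℝ P N = 0) : inner ℝ e P ^ 2 + inner ℝ e N ^ 2 ≤ 1 := by
  have horth : Orthonormal ℝ ![P, N] := by
    simp [orthonormal_vecCons_iff, hP, hN, hPN]
  simpa [he, real_inner_comm] using
    horth.sum_inner_products_le (s := Finset.univ) (x := e)

theorem abs_inner_le_norm_mul_sin_lineAngle {e V P : E} (he : ‖e‖ = 1) (hP : ‖P‖ = 1)
    (heV : inner ℝ e V = 0) : |inner ℝ V P| ≤ ‖V‖ * Real.sin (lineAngle e P) := by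
  rcases eq_or_ne V 0 with rfl | hV
  · simp
  have hVn : 0 < ‖V‖ := norm_pos_iff.2 hV
  have hbessel := inner_sq_add_inner_sq_le_one (e := P) (N := ‖V‖⁻¹ • V) hP he
    (by rw [norm_smul, norm_inv, norm_norm, inv_mul_cancel₀ hVn.ne'])
    (by rw [inner_smul_right, heV, mul_zero])
  rw [inner_smul_right, real_inner_comm e P, real_inner_comm V P] at hbessel
  rw [sin_lineAngle, ← inv_mul_le_iff₀ hVn]
  calc _ = |‖V‖⁻¹ * inner ℝ V P| := by rw [abs_mul, abs_of_pos (inv_pos.2 hVn)]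
    _ ≤ _ := Real.abs_le_sqrt (by linarith)

/-- The building block of the dual certificate: with `F 1 = 1` and `V` tangent to the unit sphere
at `e`, this function of `P` has the value `a` and the gradient `2 • V` on the sphere at `e`.
It takes the same value at `P` and `-P` whenever `F` is even. -/
noncomputable def bump (F : ℝ[X]) (a : ℝ) (e V P : E) : ℝ :=
  (a + 2 * inner ℝ e P * inner ℝ V P) * F.eval (inner ℝ e P)

/-- The derivative of `bump F a e V` at `P` in the direction `N`. -/
noncomputable def bumpDeriv (F : ℝ[X]) (a : ℝ) (e V P N : E) : ℝ :=
  2 * (inner ℝ e N * inner ℝ V P + inner ℝ e P * inner ℝ V N) * F.eval (inner ℝ e P) +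
    (a + 2 * inner ℝ e P * inner ℝ V P) * ((derivative F).eval (inner ℝ e P) * inner ℝ e N)

/-- The second derivative of `bump F a e V` along the great circle through `P` with unit velocity
`N`; the acceleration of that curve is `-P`. -/
noncomputable def bumpDeriv₂ (F : ℝ[X]) (a : ℝ) (e V P N : E) : ℝ :=
  4 * (inner ℝ e N * inner ℝ V N - inner ℝ e P * inner ℝ V P) * F.eval (inner ℝ e P) +
    4 * (inner ℝ e N * inner ℝ V P + inner ℝ e P * inner ℝ V N) *
      ((derivative F).eval (inner ℝ e P) * inner ℝ e N) +
    (a + 2 * inner ℝ e P * inner ℝ V P) *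
      ((derivative (derivative F)).eval (inner ℝ e P) * inner ℝ e N ^ 2 -
        (derivative F).eval (inner ℝ e P) * inner ℝ e P)

section Derivatives

variable (F : ℝ[X]) (a : ℝ) (e V : E)

theorem bump_neg_right (hF : ∀ t, F.eval (-t) = F.eval t) (P : E) :
    bump F a e V (-P) = bump F a e V P := by
  simp only [bump, inner_neg_right, hF]
  ring

variable {e V} in
theorem bump_self (hF : F.eval 1 = 1) (he : ‖e‖ = 1) (heV : inner ℝ e V = 0) :
    bump F a e V e = a := by
  rw [bump, real_inner_comm e V, heV, real_inner_self_eq_norm_sq, he]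
  simp [hF]

variable {e V} in
theorem bumpDeriv_self (hF : F.eval 1 = 1) (he : ‖e‖ = 1) (heV : inner ℝ e V = 0) {N : E}
    (heN : inner ℝ e N = 0) : bumpDeriv F a e V e N = 2 * inner ℝ V N := by
  rw [bumpDeriv, real_inner_comm e V, heV, heN, real_inner_self_eq_norm_sq, he]
  simp [hF]

theorem hasDerivAt_greatCircle (P N : E) (t : ℝ) :
    HasDerivAt (greatCircle P N) (greatCircle N (-P) t) t := by
  refine HasDerivAt.congr_deriv
    (((Real.hasDerivAt_cos t).smul_const P).add ((Real.hasDerivAt_sin t).smul_const N)) ?_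
  rw [greatCircle]
  module

theorem greatCircle_neg_neg (P N : E) (t : ℝ) :
    greatCircle (-P) (-N) t = -greatCircle P N t := by
  simp only [greatCircle]
  module

theorem hasDerivAt_const_inner {γ : ℝ → E} {v : E} {t : ℝ} (h : HasDerivAt γ v t) :
    HasDerivAt (fun t => inner ℝ e (γ t)) (inner ℝ e v) t :=
  (innerSL ℝ e).hasFDerivAt.comp_hasDerivAt t h

variable {γ v : ℝ → E} {t : ℝ}

theorem hasDerivAt_bump (hγ : HasDerivAt γ (v t) t) :
    HasDerivAt (fun t => bump F a e V (γ t)) (bumpDeriv F a e V (γ t) (v t)) t := by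
  have hτ := hasDerivAt_const_inner e hγ
  have hσ := hasDerivAt_const_inner V hγ
  refine ((((hτ.const_mul 2).mul hσ).const_add a).mul
    ((F.hasDerivAt _).comp t hτ)).congr_deriv ?_
  simp only [bumpDeriv, Pi.mul_apply, Function.comp_apply]
  ring

theorem hasDerivAt_bumpDeriv (hγ : HasDerivAt γ (v t) t) (hv : HasDerivAt v (-γ t) t) :
    HasDerivAt (fun t => bumpDeriv F a e V (γ t) (v t)) (bumpDeriv₂ F a e V (γ t) (v t)) t := by
  have hτ := hasDerivAt_const_inner e hγ
  have hσ := hasDerivAt_const_inner V hγ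
  have hτ' := hasDerivAt_const_inner e hv
  have hσ' := hasDerivAt_const_inner V hv
  refine (((((hτ'.mul hσ).add (hτ.mul hσ')).const_mul 2).mul
    ((F.hasDerivAt _).comp t hτ)).add ((((hτ.const_mul 2).mul hσ).const_add a).mul
      ((((derivative F).hasDerivAt _).comp t hτ).mul hτ'))).congr_deriv ?_
  simp only [bumpDeriv₂, inner_neg_right, Pi.mul_apply, Pi.add_apply, Function.comp_apply]
  ring

end Derivatives

/-- The conditions on a bump used in the estimates: its centre is a unit vector, its slope is
tangent to the sphere there, and its coefficients are bounded on the scale `1 / (n + 1)` of the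
kernel. -/
structure IsBoundedBump (n : ℕ) (A w a : ℝ) (e V : E) : Prop where
  norm_center : ‖e‖ = 1
  inner_slope : inner ℝ e V = 0
  abs_height_le : |a| ≤ A
  norm_slope_le : ‖V‖ ≤ w * ((n : ℝ) + 1)

namespace IsBoundedBump

variable {n : ℕ} {A w a u : ℝ} {e V P N : E} (hb : IsBoundedBump n A w a e V)

include hb

theorem abs_inner_slope_le (hP : ‖P‖ = 1) : |inner ℝ V P| ≤ w * ((n : ℝ) + 1) :=
  (abs_real_inner_le_norm V P).trans (by rw [hP, mul_one]; exact hb.norm_slope_le)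

theorem abs_factor_le (hP : ‖P‖ = 1) :
    |a + 2 * inner ℝ e P * inner ℝ V P| ≤
      A + 2 * w * (((n : ℝ) + 1) * Real.sin (lineAngle e P)) := by
  have hsin : 0 ≤ Real.sin (lineAngle e P) := by rw [sin_lineAngle]; positivity
  have hσ : |inner ℝ V P| ≤ w * ((n : ℝ) + 1) * Real.sin (lineAngle e P) :=
    (abs_inner_le_norm_mul_sin_lineAngle hb.norm_center hP hb.inner_slope).trans
      (by gcongr; exact hb.norm_slope_le)
  calc _ ≤ |a| + |2 * inner ℝ e P * inner ℝ V P| := abs_add_le _ _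
    _ = |a| + 2 * |inner ℝ e P| * |inner ℝ V P| := by rw [abs_mul, abs_mul, abs_two]
    _ ≤ A + 2 * 1 * (w * ((n : ℝ) + 1) * Real.sin (lineAngle e P)) := by
        gcongr
        exacts [hb.abs_height_le, abs_inner_le_one_of_norm_eq_one hb.norm_center hP]
    _ = _ := by ring

-- Since `V` is tangent at `e`, the factor `a + 2 ⟪e, P⟫ ⟪V, P⟫` costs only one power of `u⁻¹`.
theorem abs_factor_mul_pow_le (hP : ‖P‖ = 1)
    (hu : ((n : ℝ) + 1) * Real.sin (lineAngle e P) * u = 1) :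
    |a + 2 * inner ℝ e P * inner ℝ V P| * u ^ 8 ≤ (A * u + 2 * w) * u ^ 7 :=
  calc _ ≤ (A + 2 * w * (((n : ℝ) + 1) * Real.sin (lineAngle e P))) * u ^ 8 := by
        gcongr; exact hb.abs_factor_le hP
    _ = (A * u + 2 * w * (((n : ℝ) + 1) * Real.sin (lineAngle e P) * u)) * u ^ 7 := by ring
    _ = _ := by rw [hu, mul_one]

theorem abs_inner_mul_add_le (hP : ‖P‖ = 1) (hN : ‖N‖ = 1) :
    |inner ℝ e N * inner ℝ V P + inner ℝ e P * inner ℝ V N| ≤ 2 * w * ((n : ℝ) + 1) :=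
  calc _ ≤ |inner ℝ e N| * |inner ℝ V P| + |inner ℝ e P| * |inner ℝ V N| := by
        rw [← abs_mul, ← abs_mul]; exact abs_add_le _ _
    _ ≤ 1 * (w * ((n : ℝ) + 1)) + 1 * (w * ((n : ℝ) + 1)) := by
        gcongr
        exacts [abs_inner_le_one_of_norm_eq_one hb.norm_center hN, hb.abs_inner_slope_le hP,
          abs_inner_le_one_of_norm_eq_one hb.norm_center hP, hb.abs_inner_slope_le hN]
    _ = _ := by ring

theorem abs_inner_mul_sub_le (hP : ‖P‖ = 1) (hN : ‖N‖ = 1) :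
    |inner ℝ e N * inner ℝ V N - inner ℝ e P * inner ℝ V P| ≤ 2 * w * ((n : ℝ) + 1) :=
  calc _ ≤ |inner ℝ e N| * |inner ℝ V N| + |inner ℝ e P| * |inner ℝ V P| := by
        rw [← abs_mul, ← abs_mul]; exact abs_sub _ _
    _ ≤ 1 * (w * ((n : ℝ) + 1)) + 1 * (w * ((n : ℝ) + 1)) := by
        gcongr
        exacts [abs_inner_le_one_of_norm_eq_one hb.norm_center hN, hb.abs_inner_slope_le hN,
          abs_inner_le_one_of_norm_eq_one hb.norm_center hP, hb.abs_inner_slope_le hP]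
    _ = _ := by ring

theorem abs_bump_le (hP : ‖P‖ = 1) (hu : ((n : ℝ) + 1) * Real.sin (lineAngle e P) * u = 1) :
    |bump (jacksonKernel n) a e V P| ≤ (A * u + 2 * w) * u ^ 7 := by
  refine le_trans ?_ (hb.abs_factor_mul_pow_le hP hu)
  rw [bump, abs_mul]
  gcongr
  exact abs_eval_jacksonKernel_le (abs_inner_le_one_of_norm_eq_one hb.norm_center hP)
    (sin_lineAngle e P ▸ hu)

theorem abs_bumpDeriv_le (hP : ‖P‖ = 1) (hN : ‖N‖ = 1) (hPN : inner ℝ P N = 0)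
    (hu : ((n : ℝ) + 1) * Real.sin (lineAngle e P) * u = 1) :
    |bumpDeriv (jacksonKernel n) a e V P N| ≤
      ((n : ℝ) + 1) * ((4 * w * u + 8 * (1 + u) * (A * u + 2 * w)) * u ^ 7) := by
  have hτ := abs_inner_le_one_of_norm_eq_one hb.norm_center hP
  have hu' := sin_lineAngle e P ▸ hu
  have hu₀ := (abs_nonneg _).trans (abs_eval_chebyshevKernel_le hτ hu')
  have hF := abs_eval_jacksonKernel_le hτ hu'
  have hF' := abs_eval_derivative_jacksonKernel_mul_le
    (inner_sq_add_inner_sq_le_one hb.norm_center hP hN hPN) hu'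
  have hmixed := hb.abs_inner_mul_add_le hP hN
  have hpow := hb.abs_factor_mul_pow_le hP hu
  have hw : 0 ≤ 2 * w * ((n : ℝ) + 1) := (abs_nonneg _).trans hmixed
  refine (abs_add_le _ _).trans ?_
  rw [abs_mul _ (eval _ _), abs_mul 2, abs_two, abs_mul (a + _)]
  calc _ ≤ 2 * (2 * w * ((n : ℝ) + 1)) * u ^ 8 + |a + 2 * inner ℝ e P * inner ℝ V P| *
        (8 * ((n : ℝ) + 1) * u ^ 8 * (1 + u)) := by gcongr
    _ = 4 * w * ((n : ℝ) + 1) * u ^ 8 + 8 * ((n : ℝ) + 1) * (1 + u) *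
        (|a + 2 * inner ℝ e P * inner ℝ V P| * u ^ 8) := by ring
    _ ≤ 4 * w * ((n : ℝ) + 1) * u ^ 8 + 8 * ((n : ℝ) + 1) * (1 + u) *
        ((A * u + 2 * w) * u ^ 7) := by gcongr
    _ = _ := by ring

theorem abs_bumpDeriv₂_le (hP : ‖P‖ = 1) (hN : ‖N‖ = 1) (hPN : inner ℝ P N = 0)
    (hu : ((n : ℝ) + 1) * Real.sin (lineAngle e P) * u = 1) :
    |bumpDeriv₂ (jacksonKernel n) a e V P N| ≤
      ((n : ℝ) + 1) ^ 2 * ((8 * w * u + 64 * w * (1 + u) * u +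
        (56 * (1 + u) ^ 2 + 8 + 32 * (1 + u) * u) * (A * u + 2 * w)) * u ^ 7) := by
  have hτ := abs_inner_le_one_of_norm_eq_one hb.norm_center hP
  have hττ' := inner_sq_add_inner_sq_le_one hb.norm_center hP hN hPN
  have hu' := sin_lineAngle e P ▸ hu
  have hu₀ := (abs_nonneg _).trans (abs_eval_chebyshevKernel_le hτ hu')
  have hF := abs_eval_jacksonKernel_le hτ hu'
  have hF' := abs_eval_derivative_jacksonKernel_mul_le hττ' hu'
  have hF'' := abs_eval_derivative_derivative_jacksonKernel_mul_sub_le hττ' hu'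
  have hmixed := hb.abs_inner_mul_add_le hP hN
  have hpure := hb.abs_inner_mul_sub_le hP hN
  have hpow := hb.abs_factor_mul_pow_le hP hu
  obtain ⟨m, hm⟩ : ∃ m : ℝ, (n : ℝ) + 1 = m := ⟨_, rfl⟩
  have hm₁ : 1 ≤ m := by rw [← hm]; linarith [n.cast_nonneg (α := ℝ)]
  rw [hm] at hF' hF'' hmixed hpure ⊢
  have hw : 0 ≤ w := by
    have := (abs_nonneg _).trans hmixed
    exact nonneg_of_mul_nonneg_left (by linarith) (by linarith : 0 < m)
  refine (abs_add_three _ _ _).trans ?_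
  rw [abs_mul _ (eval _ _), abs_mul 4, abs_mul (4 * _), abs_mul 4, abs_mul (a + _),
    abs_of_pos (four_pos (α := ℝ))]
  calc _ ≤ 4 * (2 * w * m) * u ^ 8 + 4 * (2 * w * m) * (8 * m * u ^ 8 * (1 + u)) +
        |a + 2 * inner ℝ e P * inner ℝ V P| *
          (m ^ 2 * u ^ 8 * (56 * (1 + u) ^ 2 + 8 + 32 * (1 + u) * u)) := by gcongr
    _ = 8 * w * m * u ^ 8 + 64 * w * m ^ 2 * (1 + u) * u ^ 8 +
        m ^ 2 * (56 * (1 + u) ^ 2 + 8 + 32 * (1 + u) * u) *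
          (|a + 2 * inner ℝ e P * inner ℝ V P| * u ^ 8) := by ring
    _ ≤ 8 * w * m ^ 2 * u ^ 8 + 64 * w * m ^ 2 * (1 + u) * u ^ 8 +
        m ^ 2 * (56 * (1 + u) ^ 2 + 8 + 32 * (1 + u) * u) * ((A * u + 2 * w) * u ^ 7) := by
        gcongr
        exact le_self_pow₀ hm₁ two_ne_zero
    _ = _ := by ring

end IsBoundedBump

end Bump

section FarField

open Polynomial Set Module
open scoped Real

/-- Numerical data bounding the influence of bumps whose centres are `30 / 7 / (n + 1)`-separated
on a point at distance at least `ρ / (n + 1)` from all of them, uniformly in `n ≥ 4`: over those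
centres, with distance `θ`, the quantity `1 / ((n + 1) sin θ)` is at most `u` and its seventh
powers add up to at most `S`. -/
structure IsFarBound (ρ u S : ℝ) : Prop where
  pos : 0 < ρ
  le_five : ρ ≤ 5
  inv_le : 1 / (ρ - ρ ^ 3 / 150) ≤ u
  sum_le : (1 + 4 * ρ / (30 / 7)) ^ 3 * (1 / (ρ - ρ ^ 3 / 150)) ^ 7 +
    16 / 15 * ((1 + 8 * ρ / (30 / 7)) ^ 3 * (11 / (14 * ρ)) ^ 7) ≤ S

namespace IsFarBound

variable {E ι : Type*} [NormedAddCommGroup E] [InnerProductSpace ℝ E]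
  {n : ℕ} {ρ u S θ : ℝ}

theorem sub_cube_div_pos (h : IsFarBound ρ u S) : 0 < ρ - ρ ^ 3 / 150 := by
  have hsq : ρ ^ 2 ≤ 25 := by nlinarith [h.pos, h.le_five]
  have : 0 < ρ * (1 - ρ ^ 2 / 150) := mul_pos h.pos (by linarith)
  linarith

theorem sub_cube_div_le (h : IsFarBound ρ u S) (hn : 4 ≤ n) (hρθ : ρ / ((n : ℝ) + 1) ≤ θ)
    (hθ : θ ≤ π / 2) : ρ - ρ ^ 3 / 150 ≤ ((n : ℝ) + 1) * Real.sin θ :=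
  sub_cube_div_le_mul_sin (by norm_cast; omega) h.pos.le
    ((div_le_iff₀' (by positivity)).1 hρθ) hθ

theorem one_div_le (h : IsFarBound ρ u S) (hn : 4 ≤ n) (hρθ : ρ / ((n : ℝ) + 1) ≤ θ)
    (hθ : θ ≤ π / 2) : 1 / (((n : ℝ) + 1) * Real.sin θ) ≤ u :=
  (one_div_le_one_div_of_le h.sub_cube_div_pos (h.sub_cube_div_le hn hρθ hθ)).trans h.inv_le

theorem sum_one_div_pow_le (h : IsFarBound ρ u S) (hn : 4 ≤ n) (hE : finrank ℝ E = 4)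
    {s : Finset ι} {p : ι → E} {P : E} (hP : ‖P‖ = 1) (hp : ∀ j ∈ s, ‖p j‖ = 1)
    (hsep : (s : Set ι).Pairwise fun i j => 30 / 7 / ((n : ℝ) + 1) ≤ lineAngle (p i) (p j))
    (hfar : ∀ j ∈ s, ρ / ((n : ℝ) + 1) ≤ lineAngle P (p j)) :
    ∑ j ∈ s, (1 / (((n : ℝ) + 1) * Real.sin (lineAngle P (p j)))) ^ 7 ≤ S := by
  have : FiniteDimensional ℝ E := .of_finrank_pos (by omega)
  obtain ⟨m, hm⟩ : ∃ m : ℝ, (n : ℝ) + 1 = m := ⟨_, rfl⟩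
  have hm₅ : 5 ≤ m := by rw [← hm]; norm_cast; omega
  have hm₀ : 0 < m := by linarith
  have hρ := h.pos
  have hρm : ρ / m ≤ π / 2 := by
    rw [div_le_iff₀ hm₀]
    nlinarith [Real.pi_gt_three, h.le_five]
  have hsin : 1 / (m * Real.sin (ρ / m)) ≤ 1 / (ρ - ρ ^ 3 / 150) :=
    one_div_le_one_div_of_le h.sub_cube_div_pos (by
      rw [← hm] at hρm ⊢
      exact h.sub_cube_div_le hn le_rfl hρm)
  have hsin₀ : 0 ≤ Real.sin (ρ / m) :=
    Real.sin_nonneg_of_nonneg_of_le_pi (by positivity) (by linarith [Real.pi_pos])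
  have hpack := sum_inv_sin_lineAngle_pow_le hE (by norm_num : 3 < 7) hP hp
    (by positivity : 0 < 30 / 7 / m) ⟨by positivity, hρm⟩ (hm ▸ hsep) (hm ▸ hfar)
  simp only [hm, ← one_div_mul_one_div, mul_pow]
  rw [← Finset.mul_sum]
  calc _ ≤ (1 / m) ^ 7 * ((1 + 4 * (ρ / m) / (30 / 7 / m)) ^ 3 * (1 / Real.sin (ρ / m)) ^ 7 +
        (1 - 2 ^ 3 / 2 ^ 7)⁻¹ *
          ((1 + 8 * (ρ / m) / (30 / 7 / m)) ^ 3 * (π / (4 * (ρ / m))) ^ 7)) := by gcongr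
    _ = (1 + 4 * ρ / (30 / 7)) ^ 3 * (1 / (m * Real.sin (ρ / m))) ^ 7 +
        16 / 15 * ((1 + 8 * ρ / (30 / 7)) ^ 3 * (π / (4 * ρ)) ^ 7) := by
      rw [show (1 - 2 ^ 3 / 2 ^ 7 : ℝ)⁻¹ = 16 / 15 by norm_num]
      field_simp
    _ ≤ (1 + 4 * ρ / (30 / 7)) ^ 3 * (1 / (ρ - ρ ^ 3 / 150)) ^ 7 +
        16 / 15 * ((1 + 8 * ρ / (30 / 7)) ^ 3 * (11 / (14 * ρ)) ^ 7) := by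
      have hpi : π / (4 * ρ) ≤ 11 / (14 * ρ) := by
        rw [div_le_div_iff₀ (by positivity) (by positivity)]
        nlinarith [Real.pi_lt_d4]
      gcongr
    _ ≤ S := h.sum_le

end IsFarBound

theorem isFarBound_separation : IsFarBound (30 / 7) 0.266 0.0172 := by
  constructor <;> norm_num

theorem isFarBound_separation_sub : IsFarBound (129 / 35) 0.2984 0.0289 := by
  constructor <;> norm_num

theorem isFarBound_half_separation : IsFarBound (15 / 7) 0.4815 0.2806 := by
  constructor <;> norm_num

section Sums

variable {E ι : Type*} [NormedAddCommGroup E] [InnerProductSpace ℝ E]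

/-- The lines through the unit vectors `p j` are separated by `30 / 7 / (n + 1)`. This is the
separation at which translates of `jacksonKernel n` interpolate. -/
structure IsSeparatedOnSphere (n : ℕ) (p : ι → E) : Prop where
  norm_eq_one : ∀ j, ‖p j‖ = 1
  pairwise : Pairwise fun i j => 30 / 7 / ((n : ℝ) + 1) ≤ lineAngle (p i) (p j)

variable {n : ℕ} {A w ρ u S : ℝ} {s : Finset ι} {a : ι → ℝ} {p V : ι → E} {P N : E}
  (hn : 4 ≤ n) (hE : finrank ℝ E = 4) (hp : IsSeparatedOnSphere n p) (h : IsFarBound ρ u S)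
  (hP : ‖P‖ = 1) (hfar : ∀ j ∈ s, ρ / ((n : ℝ) + 1) ≤ lineAngle (p j) P)

include hn hE hp h hP hfar

theorem abs_sum_le_mul_of_abs_le_mul_pow {B : ℝ → ℝ} (hB : MonotoneOn B (Ici 0)) (hB₀ : 0 ≤ B 0)
    {f : ι → ℝ} (hf : ∀ j ∈ s, ∀ v, ((n : ℝ) + 1) * Real.sin (lineAngle (p j) P) * v = 1 →
      |f j| ≤ B v * v ^ 7) :
    |∑ j ∈ s, f j| ≤ B u * S := by
  obtain ⟨v, hv⟩ : ∃ v : ι → ℝ, v = fun j => 1 / (((n : ℝ) + 1) * Real.sin (lineAngle (p j) P)) :=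
    ⟨_, rfl⟩
  have hpos : ∀ j ∈ s, 0 < ((n : ℝ) + 1) * Real.sin (lineAngle (p j) P) := fun j hj =>
    h.sub_cube_div_pos.trans_le (h.sub_cube_div_le hn (hfar j hj) (lineAngle_le_pi_div_two _ _))
  have hv₀ : ∀ j ∈ s, 0 < v j := fun j hj => hv ▸ one_div_pos.2 (hpos j hj)
  have hu₀ : 0 ≤ u := (one_div_pos.2 h.sub_cube_div_pos).le.trans h.inv_le
  have hsum : ∑ j ∈ s, v j ^ 7 ≤ S := by
    simp only [hv, lineAngle_comm _ P]
    exact h.sum_one_div_pow_le hn hE hP (fun j _ => hp.norm_eq_one j)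
      (fun i _ j _ hij => hp.pairwise hij) fun j hj => lineAngle_comm P (p j) ▸ hfar j hj
  calc |∑ j ∈ s, f j| ≤ ∑ j ∈ s, |f j| := Finset.abs_sum_le_sum_abs _ _
    _ ≤ ∑ j ∈ s, B u * v j ^ 7 := by
      refine Finset.sum_le_sum fun j hj =>
        (hf j hj (v j) (by rw [hv]; exact mul_one_div_cancel (hpos j hj).ne')).trans ?_
      have := (hv₀ j hj).le
      gcongr
      exact hB this hu₀ (hv ▸ h.one_div_le hn (hfar j hj) (lineAngle_le_pi_div_two _ _))
    _ = B u * ∑ j ∈ s, v j ^ 7 := by rw [Finset.mul_sum]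
    _ ≤ B u * S := by
      gcongr
      exact hB₀.trans (hB self_mem_Ici hu₀ hu₀)

variable (hA : 0 ≤ A) (hw : 0 ≤ w) (hb : ∀ j, IsBoundedBump n A w (a j) (p j) (V j))

include hA hw hb

theorem abs_sum_bump_le :
    |∑ j ∈ s, bump (jacksonKernel n) (a j) (p j) (V j) P| ≤ (A * u + 2 * w) * S := by
  refine abs_sum_le_mul_of_abs_le_mul_pow (B := fun v => A * v + 2 * w) hn hE hp h hP hfar
    (fun x _ y _ hxy => ?_) (by positivity) fun j _ v hv => (hb j).abs_bump_le hP hv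
  dsimp only
  gcongr

variable (hN : ‖N‖ = 1) (hPN : inner ℝ P N = 0)

include hN hPN

theorem abs_sum_bumpDeriv_le :
    |∑ j ∈ s, bumpDeriv (jacksonKernel n) (a j) (p j) (V j) P N| ≤
      ((n : ℝ) + 1) * (4 * w * u + 8 * (1 + u) * (A * u + 2 * w)) * S := by
  refine abs_sum_le_mul_of_abs_le_mul_pow
    (B := fun v => ((n : ℝ) + 1) * (4 * w * v + 8 * (1 + v) * (A * v + 2 * w))) hn hE hp h hP hfar
    (fun x (hx : 0 ≤ x) y (hy : 0 ≤ y) hxy => ?_) (by positivity)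
    fun j _ v hv => ((hb j).abs_bumpDeriv_le hP hN hPN hv).trans_eq (by ring)
  dsimp only
  gcongr

theorem abs_sum_bumpDeriv₂_le :
    |∑ j ∈ s, bumpDeriv₂ (jacksonKernel n) (a j) (p j) (V j) P N| ≤
      ((n : ℝ) + 1) ^ 2 * (8 * w * u + 64 * w * (1 + u) * u +
        (56 * (1 + u) ^ 2 + 8 + 32 * (1 + u) * u) * (A * u + 2 * w)) * S := by
  refine abs_sum_le_mul_of_abs_le_mul_pow
    (B := fun v => ((n : ℝ) + 1) ^ 2 * (8 * w * v + 64 * w * (1 + v) * v +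
      (56 * (1 + v) ^ 2 + 8 + 32 * (1 + v) * v) * (A * v + 2 * w))) hn hE hp h hP hfar
    (fun x (hx : 0 ≤ x) y (hy : 0 ≤ y) hxy => ?_) (by positivity)
    fun j _ v hv => ((hb j).abs_bumpDeriv₂_le hP hN hPN hv).trans_eq (by ring)
  dsimp only
  gcongr

end Sums

end FarField

section Interpolation

open Polynomial Set Module

variable {E ι : Type*} [NormedAddCommGroup E] [InnerProductSpace ℝ E] [Fintype ι]

/-- A superposition of bumps centred at the points `p j`. -/
noncomputable def bumpSum (F : ℝ[X]) (a : ι → ℝ) (p V : ι → E) (P : E) : ℝ :=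
  ∑ j, bump F (a j) (p j) (V j) P

/-- The derivative of `bumpSum F a p V` at `P` in the direction `N`. -/
noncomputable def bumpSumDeriv (F : ℝ[X]) (a : ι → ℝ) (p V : ι → E) (P N : E) : ℝ :=
  ∑ j, bumpDeriv F (a j) (p j) (V j) P N

/-- The superposition of bumps with tangential slopes takes the values `s i` at their centres and
has vanishing gradient along the sphere there. -/
structure IsHermiteInterpolant (F : ℝ[X]) (a : ι → ℝ) (p V : ι → E) (s : ι → ℝ) : Prop where
  inner_slope : ∀ i, inner ℝ (p i) (V i) = 0
  value : ∀ i, bumpSum F a p V (p i) = s i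
  deriv_eq_zero : ∀ i N, inner ℝ (p i) N = 0 → bumpSumDeriv F a p V (p i) N = 0

/-- The linear system of Hermite interpolation: heights and tangential slopes of bumps at `p` are
sent to the values and to the derivatives, as functionals on the tangent spaces, at the points `p`
of their superposition. -/
noncomputable def hermiteMap (F : ℝ[X]) (p : ι → E) :
    ((j : ι) → ℝ × (ℝ ∙ p j)ᗮ) →ₗ[ℝ] (i : ι) → ℝ × Dual ℝ (ℝ ∙ p i)ᗮ where
  toFun x i :=
    (bumpSum F (fun j => (x j).1) p (fun j => (x j).2) (p i),
      { toFun N := bumpSumDeriv F (fun j => (x j).1) p (fun j => (x j).2) (p i) N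
        map_add' N N' := by
          simp only [bumpSumDeriv, bumpDeriv, Submodule.coe_add, inner_add_right,
            ← Finset.sum_add_distrib]
          exact Finset.sum_congr rfl fun _ _ => by ring
        map_smul' c N := by
          simp only [bumpSumDeriv, bumpDeriv, Submodule.coe_smul, inner_smul_right, smul_eq_mul,
            RingHom.id_apply, Finset.mul_sum]
          exact Finset.sum_congr rfl fun _ _ => by ring })
  map_add' x y := by
    ext i : 2
    · simp only [bumpSum, bump, Pi.add_apply, Prod.fst_add, Prod.snd_add, Submodule.coe_add,
        inner_add_left, ← Finset.sum_add_distrib]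
      exact Finset.sum_congr rfl fun _ _ => by ring
    · ext N
      simp only [bumpSumDeriv, bumpDeriv, Pi.add_apply, Prod.fst_add, Prod.snd_add,
        Submodule.coe_add, inner_add_left, LinearMap.add_apply, LinearMap.coe_mk, AddHom.coe_mk,
        ← Finset.sum_add_distrib]
      exact Finset.sum_congr rfl fun _ _ => by ring
  map_smul' c x := by
    ext i : 2
    · simp only [bumpSum, bump, Pi.smul_apply, Prod.smul_fst, Prod.smul_snd, Submodule.coe_smul,
        real_inner_smul_left, smul_eq_mul, RingHom.id_apply, Finset.mul_sum]
      exact Finset.sum_congr rfl fun _ _ => by ring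
    · ext N
      simp only [bumpSumDeriv, bumpDeriv, Pi.smul_apply, Prod.smul_fst, Prod.smul_snd,
        Submodule.coe_smul, real_inner_smul_left, smul_eq_mul, RingHom.id_apply,
        LinearMap.smul_apply, LinearMap.coe_mk, AddHom.coe_mk, Finset.mul_sum]
      exact Finset.sum_congr rfl fun _ _ => by ring

theorem isHermiteInterpolant_of_hermiteMap_eq {F : ℝ[X]} {p : ι → E} {s : ι → ℝ}
    {x : (j : ι) → ℝ × (ℝ ∙ p j)ᗮ} (hx : hermiteMap F p x = fun i => (s i, 0)) :
    IsHermiteInterpolant F (fun j => (x j).1) p (fun j => (x j).2) s where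
  inner_slope i := Submodule.mem_orthogonal_singleton_iff_inner_right.1 (x i).2.2
  value i := congr_arg Prod.fst (congr_fun hx i)
  deriv_eq_zero i N hN := DFunLike.congr_fun (congr_arg Prod.snd (congr_fun hx i))
    (⟨N, Submodule.mem_orthogonal_singleton_iff_inner_right.2 hN⟩ : (ℝ ∙ p i)ᗮ)

namespace IsHermiteInterpolant

variable [DecidableEq ι] {F : ℝ[X]} {a s : ι → ℝ} {p V : ι → E}
  (h : IsHermiteInterpolant F a p V s) (hF : F.eval 1 = 1) (hp : ∀ i, ‖p i‖ = 1)

include h hF hp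

theorem sum_erase_bump (i : ι) :
    ∑ j ∈ Finset.univ.erase i, bump F (a j) (p j) (V j) (p i) = s i - a i := by
  rw [← h.value i, bumpSum, ← Finset.add_sum_erase _ _ (Finset.mem_univ i),
    bump_self F (a i) hF (hp i) (h.inner_slope i), add_sub_cancel_left]

theorem sum_erase_bumpDeriv {i : ι} {N : E} (hN : inner ℝ (p i) N = 0) :
    ∑ j ∈ Finset.univ.erase i, bumpDeriv F (a j) (p j) (V j) (p i) N = -(2 * inner ℝ (V i) N) := by
  rw [← bumpDeriv_self F (a i) hF (hp i) (h.inner_slope i) hN, eq_neg_iff_add_eq_zero,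
    ← h.deriv_eq_zero i N hN, bumpSumDeriv, ← Finset.sum_erase_add _ _ (Finset.mem_univ i)]

end IsHermiteInterpolant

section APriori

variable {n : ℕ} {A B w : ℝ} {a s : ι → ℝ} {p V : ι → E}
  (hn : 4 ≤ n) (hE : finrank ℝ E = 4) (hp : IsSeparatedOnSphere n p)
  (h : IsHermiteInterpolant (jacksonKernel n) a p V s)

include hn hE hp h

theorem abs_sub_height_le_of_isBoundedBump (hA : 0 ≤ A) (hw : 0 ≤ w)
    (hb : ∀ j, IsBoundedBump n A w (a j) (p j) (V j)) (i : ι) :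
    |s i - a i| ≤ (A * 0.266 + 2 * w) * 0.0172 := by
  classical
  rw [← h.sum_erase_bump eval_one_jacksonKernel hp.norm_eq_one i]
  exact abs_sum_bump_le hn hE hp isFarBound_separation (hp.norm_eq_one i)
    (fun j hj => hp.pairwise (Finset.ne_of_mem_erase hj)) hA hw hb

theorem norm_slope_le_of_isBoundedBump (hA : 0 ≤ A) (hw : 0 ≤ w)
    (hb : ∀ j, IsBoundedBump n A w (a j) (p j) (V j)) (i : ι) :
    2 * ‖V i‖ ≤
      ((n : ℝ) + 1) * (4 * w * 0.266 + 8 * (1 + 0.266) * (A * 0.266 + 2 * w)) * 0.0172 := by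
  classical
  rcases eq_or_ne (V i) 0 with hV | hV
  · rw [hV, norm_zero, mul_zero]
    positivity
  have hunit : ‖‖V i‖⁻¹ • V i‖ = 1 := norm_smul_inv_norm (𝕜 := ℝ) hV
  have horth : inner ℝ (p i) (‖V i‖⁻¹ • V i) = 0 := by
    rw [real_inner_smul_right, h.inner_slope i, mul_zero]
  have hsum := abs_sum_bumpDeriv_le (s := Finset.univ.erase i) hn hE hp isFarBound_separation
    (hp.norm_eq_one i) (fun j hj => hp.pairwise (Finset.ne_of_mem_erase hj)) hA hw hb hunit horth
  rw [h.sum_erase_bumpDeriv eval_one_jacksonKernel hp.norm_eq_one horth,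
    real_inner_smul_right, real_inner_self_eq_norm_sq, abs_neg] at hsum
  calc 2 * ‖V i‖ = 2 * (‖V i‖⁻¹ * ‖V i‖ ^ 2) := by field_simp
    _ ≤ _ := (le_abs_self _).trans hsum

theorem isBoundedBump_of_isHermiteInterpolant (hB : 0 ≤ B) (hs : ∀ i, |s i| ≤ B) (i : ι) :
    IsBoundedBump n (1.006 * B) (0.0286 * B) (a i) (p i) (V i) := by
  have hm : 0 < (n : ℝ) + 1 := by positivity
  obtain ⟨w, hw⟩ : ∃ w, w * ((n : ℝ) + 1) = ‖V‖ := ⟨‖V‖ / ((n : ℝ) + 1), div_mul_cancel₀ _ hm.ne'⟩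
  have hw₀ : 0 ≤ w := nonneg_of_mul_nonneg_left (hw ▸ norm_nonneg V) hm
  have hA₀ := norm_nonneg a
  have hb : ∀ j, IsBoundedBump n ‖a‖ w (a j) (p j) (V j) := fun j =>
    ⟨hp.norm_eq_one j, h.inner_slope j, norm_le_pi_norm a j, hw ▸ norm_le_pi_norm V j⟩
  have ha : ‖a‖ ≤ B + (‖a‖ * 0.266 + 2 * w) * 0.0172 :=
    (pi_norm_le_iff_of_nonneg (by positivity)).2 fun i => by
      have hclose := abs_sub_height_le_of_isBoundedBump hn hE hp h hA₀ hw₀ hb i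
      rw [Real.norm_eq_abs]
      linarith [abs_sub_abs_le_abs_sub (a i) (s i), abs_sub_comm (a i) (s i), hs i]
  have hV : w ≤ (4 * w * 0.266 + 8 * (1 + 0.266) * (‖a‖ * 0.266 + 2 * w)) * 0.0172 / 2 := by
    refine le_of_mul_le_mul_right ?_ hm
    rw [hw]
    exact (pi_norm_le_iff_of_nonneg (by positivity)).2 fun i => by
      linarith [norm_slope_le_of_isBoundedBump hn hE hp h hA₀ hw₀ hb i]
  refine ⟨hp.norm_eq_one i, h.inner_slope i, (norm_le_pi_norm a i).trans (by linarith), ?_⟩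
  calc ‖V i‖ ≤ w * ((n : ℝ) + 1) := (hb i).norm_slope_le
    _ ≤ 0.0286 * B * ((n : ℝ) + 1) := by gcongr; linarith

end APriori

theorem exists_isHermiteInterpolant {n : ℕ} {p : ι → E} (hn : 4 ≤ n) (hE : finrank ℝ E = 4)
    (hp : IsSeparatedOnSphere n p) (s : ι → ℝ) :
    ∃ (a : ι → ℝ) (V : ι → E), IsHermiteInterpolant (jacksonKernel n) a p V s := by
  have : FiniteDimensional ℝ E := .of_finrank_pos (by omega)
  have hinj : Function.Injective (hermiteMap (jacksonKernel n) p) := by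
    refine (injective_iff_map_eq_zero _).2 fun x hx => funext fun i => ?_
    have hb := isBoundedBump_of_isHermiteInterpolant hn hE hp
      (isHermiteInterpolant_of_hermiteMap_eq (s := 0) hx) le_rfl (fun i => by simp) i
    ext1
    · simpa using hb.abs_height_le
    · simpa using hb.norm_slope_le
  have hdim : finrank ℝ ((j : ι) → ℝ × (ℝ ∙ p j)ᗮ) =
      finrank ℝ ((i : ι) → ℝ × Dual ℝ (ℝ ∙ p i)ᗮ) := by
    simp only [finrank_pi_fintype, finrank_prod, Subspace.dual_finrank_eq]
  obtain ⟨x, hx⟩ := (LinearMap.injective_iff_surjective_of_finrank_eq_finrank hdim).1 hinj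
    fun i => (s i, 0)
  exact ⟨_, _, isHermiteInterpolant_of_hermiteMap_eq hx⟩

end Interpolation

section Certificate

open Polynomial Set Module
open scoped Real

theorem abs_sub_sub_mul_le_of_abs_deriv_deriv_le {f f' f'' : ℝ → ℝ} {K T : ℝ}
    (hf : ∀ t, HasDerivAt f (f' t) t) (hf' : ∀ t, HasDerivAt f' (f'' t) t) (hT : 0 ≤ T)
    (hK : ∀ t ∈ Icc 0 T, |f'' t| ≤ K) : |f T - f 0 - f' 0 * T| ≤ K / 2 * T ^ 2 := by
  have hslope : ∀ t ∈ Icc 0 T, ‖f' t - f' 0‖ ≤ K * (t - 0) :=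
    norm_image_sub_le_of_norm_deriv_le_segment' (fun t _ => (hf' t).hasDerivWithinAt)
      fun t ht => hK t (Ico_subset_Icc_self ht)
  have hrem : ∀ t, HasDerivAt (fun t => f t - f 0 - f' 0 * t) (f' t - f' 0) t := fun t =>
    (((hf t).sub_const (f 0)).sub ((hasDerivAt_id t).const_mul (f' 0))).congr_deriv (by simp)
  have hsq : ∀ t, HasDerivAt (fun t => K / 2 * t ^ 2) (K * (t - 0)) t := fun t =>
    (((hasDerivAt_id t).pow 2).const_mul (K / 2)).congr_deriv (by simp; ring)
  exact image_norm_le_of_norm_deriv_right_le_deriv_boundary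
    (HasDerivAt.continuousOn fun t _ => hrem t) (fun t _ => (hrem t).hasDerivWithinAt) (by simp)
    hsq (fun t ht => hslope t (Ico_subset_Icc_self ht)) (right_mem_Icc.2 hT)

variable {E ι : Type*} [NormedAddCommGroup E] [InnerProductSpace ℝ E] {n : ℕ}

theorem bump_greatCircle_self (F : ℝ[X]) (a θ : ℝ) {e V N : E} (he : ‖e‖ = 1)
    (heV : inner ℝ e V = 0) (heN : inner ℝ e N = 0) :
    bump F a e V (greatCircle e N θ) =
      (a + 2 * inner ℝ V N * (Real.sin θ * Real.cos θ)) * F.eval (Real.cos θ) := by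
  simp only [bump, greatCircle, inner_add_right, real_inner_smul_right, real_inner_comm e V, heV,
    heN, real_inner_self_eq_norm_sq, he]
  ring_nf

theorem sub_sin_mul_cos_mul_jacksonKernel_mem_Icc {θ : ℝ} (hn : 4 ≤ n) (hθ : 0 < θ)
    (hY : ((n : ℝ) + 1) * θ ≤ 3 / 5) :
    θ - Real.sin θ * Real.cos θ * (jacksonKernel n).eval (Real.cos θ) ∈
      Icc 0 (θ * (1.37 * (((n : ℝ) + 1) * θ) ^ 2)) := by
  have hm : (5 : ℝ) ≤ (n : ℝ) + 1 := by norm_cast; omega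
  have hθ₁ : θ ≤ 1 := by nlinarith
  have hπ := Real.pi_gt_three
  have hsin := Real.sin_pos_of_pos_of_lt_pi hθ (by linarith)
  have hcos := Real.cos_nonneg_of_neg_pi_div_two_le_of_le (x := θ) (by linarith) (by linarith)
  have hlow := one_sub_sq_le_eval_cos_jacksonKernel (n := n) hθ (by linarith) (by linarith)
  obtain ⟨hφ₀, hφ⟩ := eval_cos_jacksonKernel_mem_Icc hn hθ hY
  have hY₀ : 0 < ((n : ℝ) + 1) * θ := by positivity
  have hθY : 25 * θ ^ 2 ≤ (((n : ℝ) + 1) * θ) ^ 2 :=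
    calc 25 * θ ^ 2 = (5 * θ) ^ 2 := by ring
      _ ≤ _ := by gcongr
  have hsq : (((n : ℝ) + 1) * θ) ^ 2 ≤ 9 / 25 := by nlinarith
  generalize (jacksonKernel n).eval (Real.cos θ) = φ at *
  generalize (((n : ℝ) + 1) * θ) ^ 2 = x at *
  constructor
  · have : Real.sin θ * Real.cos θ * φ ≤ θ * 1 * 1 := by
      gcongr
      exacts [Real.sin_le hθ.le, Real.cos_le_one θ, by linarith [sq_nonneg θ]]
    linarith
  · have hdouble : θ * (1 - 2 / 75 * x) ≤ Real.sin θ * Real.cos θ := by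
      have := Real.sin_ge_sub_cube (x := 2 * θ) (by linarith)
      rw [Real.sin_two_mul] at this
      nlinarith
    have hprod : θ * (1 - 2 / 75 * x) * (1 - 4 / 3 * x) ≤ Real.sin θ * Real.cos θ * φ :=
      mul_le_mul hdouble hlow (by linarith) (by positivity)
    have hx : 0 ≤ x := by linarith [sq_nonneg θ]
    nlinarith [mul_nonneg hθ.le (sq_nonneg x), mul_nonneg hθ.le hx]

theorem IsBoundedBump.abs_bump_le_of_le_lineAngle {α : ℝ} {e V P : E} (hn : 4 ≤ n)
    (hb : IsBoundedBump n 1.006 0.0286 α e V) (hP : ‖P‖ = 1)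
    (hY : 3 / 5 ≤ ((n : ℝ) + 1) * lineAngle e P) :
    |bump (jacksonKernel n) α e V P| ≤ 0.8 := by
  have hθ := lineAngle_le_pi_div_two e P
  have hθ₀ : 0 ≤ lineAngle e P := lineAngle_nonneg _ _
  rcases le_total (((n : ℝ) + 1) * lineAngle e P) (11 / 10) with hmid | hfar
  · have hF := eval_cos_jacksonKernel_le_of_le hn hY hmid
    rw [cos_lineAngle hb.norm_center hP, eval_abs_jacksonKernel] at hF
    have hfactor := hb.abs_factor_le hP
    have hsin : ((n : ℝ) + 1) * Real.sin (lineAngle e P) ≤ 11 / 10 :=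
      hmid.trans' (by gcongr; exact Real.sin_le hθ₀)
    have hF₀ : 0 ≤ (jacksonKernel n).eval (inner ℝ e P) := by
      rw [jacksonKernel, eval_pow]; positivity
    rw [bump, abs_mul, abs_of_nonneg hF₀]
    calc _ ≤ (1.006 + 0.0572 * 1.1 : ℝ) * (13 / 20) := by gcongr; linarith
      _ ≤ 0.8 := by norm_num
  · have hy : 1.09 ≤ ((n : ℝ) + 1) * Real.sin (lineAngle e P) :=
      (sub_cube_div_le_mul_sin (by norm_cast; omega) (by norm_num) hfar hθ).trans' (by norm_num)
    obtain ⟨y, hydef⟩ : ∃ y, ((n : ℝ) + 1) * Real.sin (lineAngle e P) = y := ⟨_, rfl⟩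
    rw [hydef] at hy
    have hy₀ : 0 < y := by linarith
    have hu : 1 / y ≤ 0.918 := by
      rw [div_le_iff₀ hy₀]; linarith
    refine (hb.abs_bump_le hP (u := 1 / y) (by rw [hydef]; field_simp)).trans ?_
    calc _ ≤ (1.006 * 0.918 + 2 * 0.0286 : ℝ) * 0.918 ^ 7 := by gcongr
      _ ≤ 0.8 := by norm_num

theorem abs_add_mul_sub_mul_le {θ r δ v χ ψ : ℝ} (hY : ((n : ℝ) + 1) * θ ≤ 3 / 5)
    (hr : |r| ≤ 0.605 * (((n : ℝ) + 1) * θ) ^ 2) (hδ : |δ| ≤ 0.0056)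
    (hv : |v| ≤ 0.0572 * ((n : ℝ) + 1)) (hχ : χ ∈ Icc 0 (4 / 3 * (((n : ℝ) + 1) * θ) ^ 2))
    (hψ : ψ ∈ Icc 0 (θ * (1.37 * (((n : ℝ) + 1) * θ) ^ 2))) :
    |r + δ * χ - v * ψ| ≤ 0.7 * (((n : ℝ) + 1) * θ) ^ 2 := by
  obtain ⟨Y, hYdef⟩ : ∃ Y, ((n : ℝ) + 1) * θ = Y := ⟨_, rfl⟩
  rw [hYdef] at hY hr hχ hψ ⊢
  obtain ⟨hχ₀, hχ⟩ := hχ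
  obtain ⟨hψ₀, hψ⟩ := hψ
  have hδχ : |δ * χ| ≤ 0.0056 * (4 / 3 * Y ^ 2) := by
    rw [abs_mul, abs_of_nonneg hχ₀]
    gcongr
  have hvψ : |v * ψ| ≤ 0.0572 * 1.37 * Y ^ 2 * (3 / 5) := by
    rw [abs_mul, abs_of_nonneg hψ₀]
    calc |v| * ψ ≤ 0.0572 * ((n : ℝ) + 1) * (θ * (1.37 * Y ^ 2)) := by gcongr
      _ = 0.0572 * 1.37 * Y ^ 2 * Y := by rw [← hYdef]; ring
      _ ≤ _ := by gcongr
  calc _ ≤ |r| + |δ * χ| + |v * ψ| := (abs_sub _ _).trans (by gcongr; exact abs_add_le _ _)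
    _ ≤ _ := by linarith [sq_nonneg Y]

variable [Fintype ι] {a s : ι → ℝ} {p V : ι → E}

theorem bumpSum_neg_right (F : ℝ[X]) (hF : ∀ t, F.eval (-t) = F.eval t) (P : E) :
    bumpSum F a p V (-P) = bumpSum F a p V P := by
  simp only [bumpSum, bump_neg_right F _ _ _ hF]

section Bounds

variable (hn : 4 ≤ n) (hE : finrank ℝ E = 4) (hp : IsSeparatedOnSphere n p)
  (hb : ∀ j, IsBoundedBump n 1.006 0.0286 (a j) (p j) (V j)) {i : ι} {N P : E} {θ : ℝ}

include hn hE hp hb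

theorem abs_sum_erase_bumpDeriv₂_greatCircle_le [DecidableEq ι] (hN : ‖N‖ = 1)
    (hpN : inner ℝ (p i) N = 0) (hθ : 0 ≤ θ) (hY : ((n : ℝ) + 1) * θ ≤ 3 / 5) :
    |∑ j ∈ Finset.univ.erase i, bumpDeriv₂ (jacksonKernel n) (a j) (p j) (V j)
      (greatCircle (p i) N θ) (greatCircle N (-p i) θ)| ≤ 1.21 * ((n : ℝ) + 1) ^ 2 := by
  have hpi := hp.norm_eq_one i
  have hm : (5 : ℝ) ≤ (n : ℝ) + 1 := by norm_cast; omega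
  have hcircle := norm_greatCircle hpi hN hpN θ
  have hclose : lineAngle (greatCircle (p i) N θ) (p i) ≤ θ := by
    simpa [norm_smul, hN, abs_of_nonneg hθ] using lineAngle_greatCircle_le_norm_sub hpi hN hN hpN
      hpN (a := θ) (b := 0) ⟨hθ, by nlinarith [Real.pi_gt_three, hm]⟩ ⟨le_rfl, by positivity⟩
  have hfar : ∀ j ∈ Finset.univ.erase i,
      129 / 35 / ((n : ℝ) + 1) ≤ lineAngle (p j) (greatCircle (p i) N θ) := fun j hj => by
    have hsep := hp.pairwise (Finset.ne_of_mem_erase hj)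
    have htri := lineAngle_triangle (hp.norm_eq_one j) hcircle hpi
    have hθ' : θ ≤ 3 / 5 / ((n : ℝ) + 1) := by rwa [le_div_iff₀' (by positivity)]
    calc _ = 30 / 7 / ((n : ℝ) + 1) - 3 / 5 / ((n : ℝ) + 1) := by ring
      _ ≤ _ := by linarith
  have hvel : ‖greatCircle N (-p i) θ‖ = 1 :=
    norm_greatCircle hN (by rwa [norm_neg])
      (by rw [inner_neg_right, real_inner_comm, hpN, neg_zero]) θ
  have horth : inner ℝ (greatCircle (p i) N θ) (greatCircle N (-p i) θ) = 0 := by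
    simp only [greatCircle, inner_add_left, inner_add_right, real_inner_smul_left,
      real_inner_smul_right, inner_neg_right, real_inner_self_eq_norm_sq, hpi, hN, hpN,
      real_inner_comm N (p i) ▸ hpN]
    ring
  refine (abs_sum_bumpDeriv₂_le hn hE hp isFarBound_separation_sub hcircle hfar (by norm_num)
    (by norm_num) hb hvel horth).trans ?_
  nlinarith [sq_nonneg ((n : ℝ) + 1)]

theorem abs_sum_erase_bump_greatCircle_sub_le [DecidableEq ι]
    (h : IsHermiteInterpolant (jacksonKernel n) a p V s) (hN : ‖N‖ = 1)
    (hpN : inner ℝ (p i) N = 0) (hθ : 0 ≤ θ) (hY : ((n : ℝ) + 1) * θ ≤ 3 / 5) :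
    |∑ j ∈ Finset.univ.erase i, bump (jacksonKernel n) (a j) (p j) (V j) (greatCircle (p i) N θ) -
      (s i - a i) + 2 * inner ℝ (V i) N * θ| ≤ 0.605 * (((n : ℝ) + 1) * θ) ^ 2 := by
  have hvel : ∀ t, HasDerivAt (greatCircle N (-p i)) (-greatCircle (p i) N t) t := fun t =>
    greatCircle_neg_neg (p i) N t ▸ hasDerivAt_greatCircle N (-p i) t
  have htaylor := abs_sub_sub_mul_le_of_abs_deriv_deriv_le
    (fun t => HasDerivAt.fun_sum (u := Finset.univ.erase i) fun j _ =>
      hasDerivAt_bump (jacksonKernel n) (a j) (p j) (V j) (hasDerivAt_greatCircle (p i) N t))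
    (fun t => HasDerivAt.fun_sum fun j _ => hasDerivAt_bumpDeriv (jacksonKernel n) (a j) (p j) (V j)
      (hasDerivAt_greatCircle (p i) N t) (hvel t)) hθ
    fun t ht => abs_sum_erase_bumpDeriv₂_greatCircle_le hn hE hp hb hN hpN ht.1
      (hY.trans' (by gcongr; exact ht.2))
  simp only [greatCircle_zero] at htaylor
  rw [h.sum_erase_bump eval_one_jacksonKernel hp.norm_eq_one i,
    h.sum_erase_bumpDeriv eval_one_jacksonKernel hp.norm_eq_one hpN] at htaylor
  calc _ = _ := by rw [neg_mul, sub_neg_eq_add]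
    _ ≤ _ := htaylor
    _ = _ := by ring

-- Near a centre the certificate is `s i * φ` up to an error of `0.7 ((n + 1) θ)²`, while the peak
-- `φ` of the kernel has already dropped by `0.9 ((n + 1) θ)²`.
theorem abs_bumpSum_greatCircle_lt_one (h : IsHermiteInterpolant (jacksonKernel n) a p V s)
    (hs : |s i| = 1) (hN : ‖N‖ = 1) (hpN : inner ℝ (p i) N = 0) (hθ : 0 < θ)
    (hY : ((n : ℝ) + 1) * θ ≤ 3 / 5) :
    |bumpSum (jacksonKernel n) a p V (greatCircle (p i) N θ)| < 1 := by
  classical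
  have hrest := abs_sum_erase_bump_greatCircle_sub_le hn hE hp hb h hN hpN hθ.le hY
  have hheight := abs_sub_height_le_of_isBoundedBump hn hE hp h (by norm_num) (by norm_num) hb i
  have hslope : |2 * inner ℝ (V i) N| ≤ 0.0572 * ((n : ℝ) + 1) := by
    rw [abs_mul, abs_two]
    linarith [(hb i).abs_inner_slope_le hN]
  have hm : (5 : ℝ) ≤ (n : ℝ) + 1 := by norm_cast; omega
  have hlow := one_sub_sq_le_eval_cos_jacksonKernel (n := n) hθ
    (by nlinarith [Real.pi_gt_three, hm]) (by linarith)
  obtain ⟨hφ₀, hφ⟩ := eval_cos_jacksonKernel_mem_Icc hn hθ hY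
  have hψ := sub_sin_mul_cos_mul_jacksonKernel_mem_Icc hn hθ hY
  have hY₀ : 0 < ((n : ℝ) + 1) * θ := by positivity
  rw [bumpSum, ← Finset.add_sum_erase _ _ (Finset.mem_univ i), bump_greatCircle_self _ _ _
    (hp.norm_eq_one i) (h.inner_slope i) hpN]
  generalize (jacksonKernel n).eval (Real.cos θ) = φ at *
  generalize ∑ j ∈ Finset.univ.erase i,
    bump (jacksonKernel n) (a j) (p j) (V j) (greatCircle (p i) N θ) = f at *
  generalize 2 * inner ℝ (V i) N = v at *
  have herror := abs_add_mul_sub_mul_le hY hrest (hheight.trans (by norm_num)) hslope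
    ⟨by linarith [sq_nonneg (((n : ℝ) + 1) * θ)], sub_le_comm.1 hlow⟩ hψ
  calc _ = |s i * φ + ((f - (s i - a i) + v * θ) + (s i - a i) * (1 - φ) -
        v * (θ - Real.sin θ * Real.cos θ * φ))| := by congr 1; ring
    _ ≤ |s i| * φ + 0.7 * (((n : ℝ) + 1) * θ) ^ 2 :=
      (abs_add_le _ _).trans (by rw [abs_mul, abs_of_nonneg hφ₀]; gcongr)
    _ < 1 := by
      rw [hs, one_mul]
      linarith [sq_pos_of_pos hY₀]

theorem abs_bumpSum_lt_one_of_le_lineAngle (hP : ‖P‖ = 1)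
    (hY : 3 / 5 ≤ ((n : ℝ) + 1) * lineAngle (p i) P)
    (hnearest : ∀ j, lineAngle (p i) P ≤ lineAngle (p j) P) :
    |bumpSum (jacksonKernel n) a p V P| < 1 := by
  classical
  have hfar : ∀ j ∈ Finset.univ.erase i, 15 / 7 / ((n : ℝ) + 1) ≤ lineAngle (p j) P :=
    fun j hj => by
    have hsep := hp.pairwise (Finset.ne_of_mem_erase hj)
    have htri := lineAngle_triangle (hp.norm_eq_one j) hP (hp.norm_eq_one i)
    rw [lineAngle_comm P] at htri
    calc _ = 30 / 7 / ((n : ℝ) + 1) / 2 := by ring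
      _ ≤ _ := by linarith [hnearest j]
  have hself := (hb i).abs_bump_le_of_le_lineAngle hn hP hY
  have hrest := abs_sum_bump_le hn hE hp isFarBound_half_separation hP hfar
    (by norm_num) (by norm_num) hb
  rw [bumpSum, ← Finset.add_sum_erase _ _ (Finset.mem_univ i)]
  refine (abs_add_le _ _).trans_lt ?_
  linarith

end Bounds

theorem exists_bumpSum_eq_and_abs_lt_one (hn : 4 ≤ n) (hE : finrank ℝ E = 4)
    (hp : IsSeparatedOnSphere n p) (hs : ∀ i, |s i| = 1) :
    ∃ (a : ι → ℝ) (V : ι → E), (∀ i, bumpSum (jacksonKernel n) a p V (p i) = s i) ∧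
      ∀ P, ‖P‖ = 1 → (∀ i, 0 < lineAngle (p i) P) → |bumpSum (jacksonKernel n) a p V P| < 1 := by
  classical
  obtain ⟨a, V, h⟩ := exists_isHermiteInterpolant hn hE hp s
  have hb : ∀ i, IsBoundedBump n 1.006 0.0286 (a i) (p i) (V i) := fun i => by
    simpa using isBoundedBump_of_isHermiteInterpolant hn hE hp h zero_le_one (fun i => (hs i).le) i
  refine ⟨a, V, h.value, fun P hP hpos => ?_⟩
  rcases isEmpty_or_nonempty ι with hι | hι
  · simp [bumpSum]
  obtain ⟨i, hi⟩ := Finite.exists_min fun i => lineAngle (p i) P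
  rcases le_total (3 / 5) (((n : ℝ) + 1) * lineAngle (p i) P) with hY | hY
  · exact abs_bumpSum_lt_one_of_le_lineAngle hn hE hp hb hP hY hi
  obtain ⟨N, hN, hpN, hPN⟩ := exists_greatCircle_lineAngle_eq (hp.norm_eq_one i) hP (hpos i)
  have hnear := abs_bumpSum_greatCircle_lt_one hn hE hp hb h (hs i) hN hpN (hpos i) hY
  rcases hPN with hPN | hPN <;> rw [hPN] at hnear
  · exact hnear
  · rwa [bumpSum_neg_right _ eval_neg_jacksonKernel] at hnear

end Certificate

section QuaternionCover

open Metric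
open scoped Real Quaternion Matrix

/-- The matrix of `v ↦ q v q̄` on imaginary quaternions: for unit `q`, the rotation
covered by `q`. -/
def rotationMatrix (q : ℍ[ℝ]) : Mat3 :=
  !![q.re ^ 2 + q.imI ^ 2 - q.imJ ^ 2 - q.imK ^ 2,
      2 * (q.imI * q.imJ - q.re * q.imK), 2 * (q.imI * q.imK + q.re * q.imJ);
    2 * (q.imI * q.imJ + q.re * q.imK),
      q.re ^ 2 - q.imI ^ 2 + q.imJ ^ 2 - q.imK ^ 2, 2 * (q.imJ * q.imK - q.re * q.imI);
    2 * (q.imI * q.imK - q.re * q.imJ), 2 * (q.imJ * q.imK + q.re * q.imI),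
      q.re ^ 2 - q.imI ^ 2 - q.imJ ^ 2 + q.imK ^ 2]

theorem rotationMatrix_one : rotationMatrix 1 = 1 := by
  ext i j
  fin_cases i <;> fin_cases j <;> simp [rotationMatrix]

theorem rotationMatrix_neg (q : ℍ[ℝ]) : rotationMatrix (-q) = rotationMatrix q := by
  simp [rotationMatrix]

theorem rotationMatrix_star (q : ℍ[ℝ]) : rotationMatrix (star q) = (rotationMatrix q)ᵀ := by
  ext i j
  fin_cases i <;> fin_cases j <;> simp [rotationMatrix] <;> ring

theorem rotationMatrix_mul (p q : ℍ[ℝ]) :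
    rotationMatrix (p * q) = rotationMatrix p * rotationMatrix q := by
  ext i j
  fin_cases i <;> fin_cases j <;>
    simp [rotationMatrix, Matrix.mul_apply, Fin.sum_univ_three] <;> ring

theorem sum_sq_eq_one_of_norm_eq_one {q : ℍ[ℝ]} (hq : ‖q‖ = 1) :
    q.re ^ 2 + q.imI ^ 2 + q.imJ ^ 2 + q.imK ^ 2 = 1 := by
  rw [← Quaternion.normSq_def', Quaternion.normSq_eq_norm_mul_self, hq, mul_one]

theorem trace_rotationMatrix {q : ℍ[ℝ]} (hq : ‖q‖ = 1) :
    (rotationMatrix q).trace = 4 * q.re ^ 2 - 1 := by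
  have hsq := sum_sq_eq_one_of_norm_eq_one hq
  rw [Matrix.trace_fin_three]
  simp only [rotationMatrix, Matrix.of_apply, Matrix.cons_val]
  linear_combination -hsq

theorem star_mul_self_of_norm_eq_one {q : ℍ[ℝ]} (hq : ‖q‖ = 1) : star q * q = 1 := by
  rw [Quaternion.star_mul_self, Quaternion.normSq_eq_norm_mul_self, hq, mul_one,
    Quaternion.coe_one]

theorem transpose_rotationMatrix_mul_self {q : ℍ[ℝ]} (hq : ‖q‖ = 1) :
    (rotationMatrix q)ᵀ * rotationMatrix q = 1 := by
  rw [← rotationMatrix_star, ← rotationMatrix_mul, star_mul_self_of_norm_eq_one hq,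
    rotationMatrix_one]

theorem det_rotationMatrix (q : ℍ[ℝ]) : (rotationMatrix q).det = (‖q‖ ^ 2) ^ 3 := by
  rw [sq, ← Quaternion.normSq_eq_norm_mul_self, Quaternion.normSq_def', Matrix.det_fin_three]
  simp only [rotationMatrix, Matrix.of_apply, Matrix.cons_val]
  ring

theorem isSO3_rotationMatrix {q : ℍ[ℝ]} (hq : ‖q‖ = 1) : IsSO3 (rotationMatrix q) :=
  ⟨transpose_rotationMatrix_mul_self hq, by rw [det_rotationMatrix, hq]; norm_num⟩

theorem rotAngle_rotationMatrix {q : ℍ[ℝ]} (hq : ‖q‖ = 1) :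
    rotAngle (rotationMatrix q) = 2 * lineAngle 1 q := by
  have hre : inner ℝ 1 q = q.re := by simp [Quaternion.inner_def]
  have hcos : (4 * q.re ^ 2 - 1 - 1) / 2 = Real.cos (2 * lineAngle 1 q) := by
    rw [Real.cos_two_mul, cos_lineAngle norm_one hq, hre, sq_abs]
    ring
  rw [rotAngle, trace_rotationMatrix hq, hcos, Real.arccos_cos]
  · linarith [lineAngle_nonneg 1 q]
  · linarith [lineAngle_le_pi_div_two 1 q]

theorem rotAngle_inv_rotationMatrix_mul {p q : ℍ[ℝ]} (hp : ‖p‖ = 1) (hq : ‖q‖ = 1) :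
    rotAngle ((rotationMatrix p)⁻¹ * rotationMatrix q) = 2 * lineAngle p q := by
  have hinner : inner ℝ 1 (star p * q) = inner ℝ p q := by
    simp [Quaternion.inner_def]
    ring
  rw [Matrix.inv_eq_left_inv (transpose_rotationMatrix_mul_self hp), ← rotationMatrix_star,
    ← rotationMatrix_mul, rotAngle_rotationMatrix (by rw [norm_mul, norm_star, hp, hq, one_mul]),
    lineAngle, lineAngle, hinner]

theorem rotationMatrix_eq_of_lineAngle_eq_zero {p q : ℍ[ℝ]} (hp : ‖p‖ = 1) (hq : ‖q‖ = 1)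
    (h : lineAngle p q = 0) : rotationMatrix p = rotationMatrix q := by
  have hone : |inner ℝ p q| = 1 := by rw [← cos_lineAngle hp hq, h, Real.cos_zero]
  rcases eq_or_eq_neg_of_abs_eq hone with h₁ | h₁
  · rw [(inner_eq_one_iff_of_norm_eq_one hp hq).1 h₁]
  · rw [(inner_eq_neg_one_iff_of_norm_eq_one hp hq).1 h₁, rotationMatrix_neg]

theorem exists_mul_cos_eq_and_mul_sin_eq {c s r : ℝ} (hr : 0 ≤ r) (h : c ^ 2 + s ^ 2 = r ^ 2) :
    ∃ θ : ℝ, r * Real.cos θ = c ∧ r * Real.sin θ = s := by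
  have hnorm : ‖(⟨c, s⟩ : ℂ)‖ = r := by
    rw [Complex.norm_def, Complex.normSq_mk, ← sq, ← sq, h, Real.sqrt_sq hr]
  refine ⟨Complex.arg ⟨c, s⟩, ?_, ?_⟩
  · rw [← hnorm, Complex.norm_mul_cos_arg]
  · rw [← hnorm, Complex.norm_mul_sin_arg]

/-- The unit quaternion with Euler angles `α, β, γ`, that is, the product of
`cos (α / 2) + sin (α / 2) k`, `cos (β / 2) + sin (β / 2) i` and `cos (γ / 2) + sin (γ / 2) k`. -/
noncomputable def eulerQuaternion (α β γ : ℝ) : ℍ[ℝ] :=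
  ⟨Real.cos ((α + γ) / 2) * Real.cos (β / 2), Real.cos ((α - γ) / 2) * Real.sin (β / 2),
    Real.sin ((α - γ) / 2) * Real.sin (β / 2), Real.sin ((α + γ) / 2) * Real.cos (β / 2)⟩

theorem eulerQuaternion_eq_mul (α β γ : ℝ) :
    eulerQuaternion α β γ =
      eulerQuaternion α 0 0 * eulerQuaternion 0 β 0 * eulerQuaternion γ 0 0 := by
  ext <;> simp only [Quaternion.re_mul, Quaternion.imI_mul, Quaternion.imJ_mul,
    Quaternion.imK_mul] <;>
    simp [eulerQuaternion, add_div, sub_div, Real.cos_add, Real.cos_sub, Real.sin_add,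
      Real.sin_sub] <;> ring

theorem norm_eulerQuaternion (α β γ : ℝ) : ‖eulerQuaternion α β γ‖ = 1 := by
  rw [← sq_eq_sq₀ (norm_nonneg _) zero_le_one, sq, ← Quaternion.normSq_eq_norm_mul_self,
    Quaternion.normSq_def']
  simp only [eulerQuaternion, mul_pow, Real.cos_sq']
  ring

theorem rotationMatrix_eulerQuaternion_fst (α : ℝ) :
    rotationMatrix (eulerQuaternion α 0 0) = Rz α := by
  have hα : α = 2 * (α / 2) := by ring
  rw [Rz, show Real.cos α = _ from congrArg _ hα, show Real.sin α = _ from congrArg _ hα,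
    Real.cos_two_mul', Real.sin_two_mul]
  ext i j
  fin_cases i <;> fin_cases j <;> simp [rotationMatrix, eulerQuaternion] <;> ring

theorem rotationMatrix_eulerQuaternion_snd (β : ℝ) :
    rotationMatrix (eulerQuaternion 0 β 0) = Rx β := by
  have hβ : β = 2 * (β / 2) := by ring
  rw [Rx, show Real.cos β = _ from congrArg _ hβ, show Real.sin β = _ from congrArg _ hβ,
    Real.cos_two_mul', Real.sin_two_mul]
  ext i j
  fin_cases i <;> fin_cases j <;> simp [rotationMatrix, eulerQuaternion] <;> ring

theorem rotationMatrix_eulerQuaternion (α β γ : ℝ) :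
    rotationMatrix (eulerQuaternion α β γ) = Rz α * Rx β * Rz γ := by
  rw [eulerQuaternion_eq_mul, rotationMatrix_mul, rotationMatrix_mul,
    rotationMatrix_eulerQuaternion_fst, rotationMatrix_eulerQuaternion_snd,
    rotationMatrix_eulerQuaternion_fst]

theorem isSO3_mul {A B : Mat3} (hA : IsSO3 A) (hB : IsSO3 B) : IsSO3 (A * B) := by
  refine ⟨?_, by rw [Matrix.det_mul, hA.2, hB.2, mul_one]⟩
  rw [Matrix.transpose_mul, Matrix.mul_assoc, ← Matrix.mul_assoc Aᵀ, hA.1, Matrix.one_mul, hB.1]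

theorem isSO3_transpose {A : Mat3} (hA : IsSO3 A) : IsSO3 Aᵀ :=
  ⟨by rw [Matrix.transpose_transpose]; exact mul_eq_one_comm.1 hA.1,
    by rw [Matrix.det_transpose, hA.2]⟩

theorem exists_eq_Rz_of_col_eq {W : Mat3} (hW : IsSO3 W) (hcol : ∀ i, W i 2 = (1 : Mat3) i 2) :
    ∃ γ, W = Rz γ := by
  obtain ⟨horth, hdet⟩ := hW
  have hrows : W * Wᵀ = 1 := mul_eq_one_comm.1 horth
  have hrow : W 2 0 ^ 2 + W 2 1 ^ 2 + W 2 2 ^ 2 = 1 := by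
    simpa [Matrix.mul_apply, Fin.sum_univ_three, sq] using congrFun₂ hrows 2 2
  have hcols : ∀ i j, W 0 i * W 0 j + W 1 i * W 1 j + W 2 i * W 2 j = (1 : Mat3) i j :=
    fun i j => by
      simpa [Matrix.mul_apply, Fin.sum_univ_three] using congrFun₂ horth i j
  have h₀₂ : W 0 2 = 0 := by simpa using hcol 0
  have h₁₂ : W 1 2 = 0 := by simpa using hcol 1
  have h₂₂ : W 2 2 = 1 := by simpa using hcol 2
  have h₂₀ : W 2 0 = 0 := by nlinarith [sq_nonneg (W 2 0), sq_nonneg (W 2 1)]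
  have h₂₁ : W 2 1 = 0 := by nlinarith [sq_nonneg (W 2 0), sq_nonneg (W 2 1)]
  have h₀₀ : W 0 0 ^ 2 + W 1 0 ^ 2 = 1 := by simpa [h₂₀, sq] using hcols 0 0
  have h₁₁ : W 0 1 ^ 2 + W 1 1 ^ 2 = 1 := by simpa [h₂₁, sq] using hcols 1 1
  have hdet₂ : W 0 0 * W 1 1 - W 0 1 * W 1 0 = 1 := by
    simpa [Matrix.det_fin_three, h₀₂, h₁₂, h₂₂] using hdet
  have hdist : (W 0 0 - W 1 1) ^ 2 + (W 0 1 + W 1 0) ^ 2 = 0 := by linarith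
  have hdiag : W 0 0 = W 1 1 := by
    nlinarith [hdist, sq_nonneg (W 0 0 - W 1 1), sq_nonneg (W 0 1 + W 1 0)]
  have hanti : W 0 1 = -W 1 0 := by
    nlinarith [hdist, sq_nonneg (W 0 0 - W 1 1), sq_nonneg (W 0 1 + W 1 0)]
  obtain ⟨γ, hcos, hsin⟩ := exists_mul_cos_eq_and_mul_sin_eq zero_le_one
    (show W 0 0 ^ 2 + W 1 0 ^ 2 = 1 ^ 2 by rw [h₀₀, one_pow])
  rw [one_mul] at hcos hsin
  refine ⟨γ, ?_⟩
  ext i j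
  fin_cases i <;> fin_cases j <;>
    simp [Rz, hcos, hsin, h₀₂, h₁₂, h₂₂, h₂₀, h₂₁, ← hdiag, hanti]

theorem exists_col_eq_Rz_mul_Rx {v : Fin 3 → ℝ} (hv : v 0 ^ 2 + v 1 ^ 2 + v 2 ^ 2 = 1) :
    ∃ α β, ∀ i, v i = (Rz α * Rx β) i 2 := by
  have hcos : Real.cos (Real.arccos (v 2)) = v 2 :=
    Real.cos_arccos (by nlinarith [sq_nonneg (v 0), sq_nonneg (v 1)])
      (by nlinarith [sq_nonneg (v 0), sq_nonneg (v 1)])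
  have hsin : 0 ≤ Real.sin (Real.arccos (v 2)) :=
    Real.sin_nonneg_of_nonneg_of_le_pi (Real.arccos_nonneg _) (Real.arccos_le_pi _)
  obtain ⟨α, hα₁, hα₀⟩ := exists_mul_cos_eq_and_mul_sin_eq (c := -v 1) (s := v 0) hsin (by
    rw [Real.sin_sq, hcos]
    linarith)
  refine ⟨α, Real.arccos (v 2), fun i => ?_⟩
  fin_cases i <;> simp [Rz, Rx, Matrix.mul_apply, Fin.sum_univ_three] <;> linarith

theorem exists_eq_Rz_mul_Rx_mul_Rz {z : Mat3} (hz : IsSO3 z) :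
    ∃ α β γ, z = Rz α * Rx β * Rz γ := by
  have hcol : z 0 2 ^ 2 + z 1 2 ^ 2 + z 2 2 ^ 2 = 1 := by
    simpa [Matrix.mul_apply, Fin.sum_univ_three, sq] using congrFun₂ hz.1 2 2
  obtain ⟨α, β, hαβ⟩ := exists_col_eq_Rz_mul_Rx (v := fun i => z i 2) hcol
  have hA : IsSO3 (Rz α * Rx β) := by
    rw [← rotationMatrix_eulerQuaternion_fst, ← rotationMatrix_eulerQuaternion_snd]
    exact isSO3_mul (isSO3_rotationMatrix (norm_eulerQuaternion _ _ _))
      (isSO3_rotationMatrix (norm_eulerQuaternion _ _ _))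
  obtain ⟨γ, hγ⟩ := exists_eq_Rz_of_col_eq (isSO3_mul (isSO3_transpose hA) hz) fun i => by
    simp only [← hA.1, Matrix.mul_apply, hαβ]
  refine ⟨α, β, γ, ?_⟩
  rw [← hγ, ← Matrix.mul_assoc, mul_eq_one_comm.1 hA.1, Matrix.one_mul]

theorem exists_rotationMatrix_eq (z : SO3) : ∃ q : ℍ[ℝ], ‖q‖ = 1 ∧ rotationMatrix q = z := by
  obtain ⟨α, β, γ, h⟩ := exists_eq_Rz_mul_Rx_mul_Rz z.2
  exact ⟨_, norm_eulerQuaternion α β γ, (rotationMatrix_eulerQuaternion α β γ).trans h.symm⟩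

theorem exists_eulerQuaternion_eq {q : ℍ[ℝ]} (hq : ‖q‖ = 1) :
    ∃ α β γ, 0 ≤ β ∧ β ≤ π ∧ eulerQuaternion α β γ = q := by
  have hsq := sum_sq_eq_one_of_norm_eq_one hq
  have hre : 0 ≤ q.re ^ 2 + q.imK ^ 2 := by positivity
  have him : 0 ≤ q.imI ^ 2 + q.imJ ^ 2 := by positivity
  obtain ⟨u, hure, huK⟩ := exists_mul_cos_eq_and_mul_sin_eq (Real.sqrt_nonneg _)
    (Real.sq_sqrt hre).symm
  obtain ⟨v, hvI, hvJ⟩ := exists_mul_cos_eq_and_mul_sin_eq (Real.sqrt_nonneg _)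
    (Real.sq_sqrt him).symm
  have hcos : Real.cos (Real.arccos √(q.re ^ 2 + q.imK ^ 2)) = √(q.re ^ 2 + q.imK ^ 2) :=
    Real.cos_arccos (by linarith [Real.sqrt_nonneg (q.re ^ 2 + q.imK ^ 2)])
      (Real.sqrt_le_one.2 (by linarith))
  have hsin : Real.sin (Real.arccos √(q.re ^ 2 + q.imK ^ 2)) = √(q.imI ^ 2 + q.imJ ^ 2) := by
    rw [Real.sin_arccos, Real.sq_sqrt hre]
    congr 1
    linarith
  refine ⟨u + v, 2 * Real.arccos √(q.re ^ 2 + q.imK ^ 2), u - v,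
    by linarith [Real.arccos_nonneg √(q.re ^ 2 + q.imK ^ 2)],
    by linarith [Real.arccos_le_pi_div_two.2 (Real.sqrt_nonneg (q.re ^ 2 + q.imK ^ 2))], ?_⟩
  have hadd : (u + v + (u - v)) / 2 = u := by ring
  have hsub : (u + v - (u - v)) / 2 = v := by ring
  rw [eulerQuaternion, mul_div_cancel_left₀ _ two_ne_zero, hcos, hsin, hadd, hsub, mul_comm, hure,
    mul_comm, hvI, mul_comm, hvJ, mul_comm, huK]
  rfl

/-- A choice of unit quaternion covering a rotation. -/
noncomputable def quaternionLift (z : SO3) : ℍ[ℝ] := (exists_rotationMatrix_eq z).choose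

theorem norm_quaternionLift (z : SO3) : ‖quaternionLift z‖ = 1 :=
  (exists_rotationMatrix_eq z).choose_spec.1

theorem rotationMatrix_quaternionLift (z : SO3) : rotationMatrix (quaternionLift z) = z :=
  (exists_rotationMatrix_eq z).choose_spec.2

instance : BorelSpace SO3 := ⟨rfl⟩

instance : T2Space SO3 := inferInstanceAs (T2Space {x : Mat3 // IsSO3 x})

/-- The double cover of `SO(3)` by the unit quaternions. -/
def quaternionCover (q : sphere (0 : ℍ[ℝ]) 1) : SO3 :=
  ⟨rotationMatrix q, isSO3_rotationMatrix (mem_sphere_zero_iff_norm.1 q.2)⟩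

theorem continuous_rotationMatrix : Continuous rotationMatrix := by
  have hre : Continuous fun q : ℍ[ℝ] => q.re := Quaternion.continuous_re
  have hI : Continuous fun q : ℍ[ℝ] => q.imI := Quaternion.continuous_imI
  have hJ : Continuous fun q : ℍ[ℝ] => q.imJ := Quaternion.continuous_imJ
  have hK : Continuous fun q : ℍ[ℝ] => q.imK := Quaternion.continuous_imK
  refine continuous_matrix fun i j => ?_
  fin_cases i <;> fin_cases j <;> simp only [rotationMatrix] <;> fun_prop

theorem continuous_quaternionCover : Continuous quaternionCover :=
  (continuous_rotationMatrix.comp continuous_subtype_val).subtype_mk _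

theorem surjective_quaternionCover : Function.Surjective quaternionCover := fun z =>
  ⟨⟨quaternionLift z, mem_sphere_zero_iff_norm.2 (norm_quaternionLift z)⟩,
    Subtype.ext (rotationMatrix_quaternionLift z)⟩

instance : CompactSpace SO3 :=
  surjective_quaternionCover.compactSpace continuous_quaternionCover

theorem isQuotientMap_quaternionCover : Topology.IsQuotientMap quaternionCover :=
  Topology.IsQuotientMap.of_surjective_continuous surjective_quaternionCover
    continuous_quaternionCover

end QuaternionCover

section WignerFormula

open Polynomial Metric
open scoped Real Quaternion ComplexConjugate

theorem iteratedDeriv_eval (p : ℝ[X]) (j : ℕ) :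
    iteratedDeriv j (fun u => p.eval u) = fun u => (derivative^[j] p).eval u := by
  induction j with
  | zero => simp
  | succ j ih =>
    rw [iteratedDeriv_succ, ih, Function.iterate_succ_apply']
    exact funext fun u => Polynomial.deriv _

theorem iterate_derivative_ne_zero {p : ℝ[X]} (hp : p ≠ 0) {j : ℕ} (hj : j ≤ p.natDegree) :
    derivative^[j] p ≠ 0 := by
  intro h
  have hcoeff := congrArg (fun q => q.coeff (p.natDegree - j)) h
  simp [coeff_iterate_derivative, Nat.sub_add_cancel hj, hp, Nat.descFactorial_eq_zero_iff_lt,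
    hj.not_gt] at hcoeff

theorem natDegree_iterate_derivative_eq (p : ℝ[X]) (j : ℕ) :
    (derivative^[j] p).natDegree = p.natDegree - j := by
  induction j with
  | zero => simp
  | succ j ih => rw [Function.iterate_succ_apply', natDegree_derivative, ih, Nat.sub_sub]

theorem isCoprime_one_sub_X_one_add_X : IsCoprime (1 - X : ℝ[X]) (1 + X) :=
  ⟨C (1 / 2), C (1 / 2), by
    rw [← mul_add, show (1 - X + (1 + X) : ℝ[X]) = C 2 by rw [C_ofNat]; ring, ← C_mul]
    norm_num⟩

theorem natDegree_one_sub_X_pow_mul_one_add_X_pow (a b : ℕ) :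
    ((1 - X : ℝ[X]) ^ a * (1 + X) ^ b).natDegree = a + b := by
  have hsub : (1 - X : ℝ[X]).natDegree = 1 := by compute_degree!
  have hadd : (1 + X : ℝ[X]).natDegree = 1 := by compute_degree!
  rw [natDegree_mul (pow_ne_zero _ (ne_zero_of_natDegree_gt (hsub ▸ one_pos)))
    (pow_ne_zero _ (ne_zero_of_natDegree_gt (hadd ▸ one_pos))), natDegree_pow, natDegree_pow,
    hsub, hadd, mul_one, mul_one]

theorem one_sub_X_pow_mul_one_add_X_pow_ne_zero (a b : ℕ) :
    (1 - X : ℝ[X]) ^ a * (1 + X) ^ b ≠ 0 := fun h => by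
  have heval := congrArg (eval (1 / 2)) h
  norm_num at heval

theorem exists_iterate_derivative_one_sub_X_pow_mul_one_add_X_pow_eq {a b j : ℕ}
    (hj : j ≤ a + b) :
    ∃ Q : ℝ[X], Q ≠ 0 ∧ a - j + (b - j) + Q.natDegree = a + b - j ∧
      derivative^[j] ((1 - X : ℝ[X]) ^ a * (1 + X) ^ b) =
        (1 - X) ^ (a - j) * (1 + X) ^ (b - j) * Q := by
  obtain ⟨Q, hQ⟩ := (isCoprime_one_sub_X_one_add_X.pow (m := a - j) (n := b - j)).mul_dvd
    (pow_sub_dvd_iterate_derivative_of_pow_dvd j (dvd_mul_right ((1 - X : ℝ[X]) ^ a) _))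
    (pow_sub_dvd_iterate_derivative_of_pow_dvd j (dvd_mul_left ((1 + X : ℝ[X]) ^ b) _))
  have hQ₀ : Q ≠ 0 := by
    rintro rfl
    refine iterate_derivative_ne_zero (one_sub_X_pow_mul_one_add_X_pow_ne_zero a b) ?_
      (hQ.trans (mul_zero _))
    rwa [natDegree_one_sub_X_pow_mul_one_add_X_pow]
  refine ⟨Q, hQ₀, ?_, hQ⟩
  rw [← natDegree_one_sub_X_pow_mul_one_add_X_pow (a - j) (b - j),
    ← natDegree_mul (one_sub_X_pow_mul_one_add_X_pow_ne_zero _ _) hQ₀, ← hQ,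
    natDegree_iterate_derivative_eq, natDegree_one_sub_X_pow_mul_one_add_X_pow]

theorem sq_cpow_neg_div_two_mul_pow_toNat {r : ℝ} (hr : 0 ≤ r) (j : ℤ) :
    ((r ^ 2 : ℝ) : ℂ) ^ (-(j : ℂ) / 2) * ((r ^ 2 : ℝ) : ℂ) ^ j.toNat = (r : ℂ) ^ j.natAbs := by
  rcases hr.eq_or_lt with rfl | hr₀
  · rcases eq_or_ne j 0 with rfl | hj
    · simp
    · simp [Complex.zero_cpow, hj]
  · have hcpow : ((r ^ 2 : ℝ) : ℂ) ^ (-(j : ℂ) / 2) = (r : ℂ) ^ (-j) := by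
      rw [show -(j : ℂ) / 2 = ((-(j : ℝ) / 2 : ℝ) : ℂ) by push_cast; ring,
        ← Complex.ofReal_cpow (by positivity), ← Real.rpow_natCast, ← Real.rpow_mul hr,
        show ((2 : ℕ) : ℝ) * (-(j : ℝ) / 2) = ((-j : ℤ) : ℝ) by push_cast; ring,
        Real.rpow_intCast, Complex.ofReal_zpow]
    rw [hcpow, Complex.ofReal_pow, ← pow_mul, ← zpow_natCast, ← zpow_natCast,
      ← zpow_add₀ (Complex.ofReal_ne_zero.2 hr₀.ne')]
    congr 1
    omega

theorem wignerC_ne_zero (l : ℕ) (k m : ℤ) : wignerC l k m ≠ 0 := by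
  have hfac (n : ℕ) : (0 : ℝ) < n.factorial := Nat.cast_pos.2 n.factorial_pos
  refine mul_ne_zero (div_ne_zero (mul_ne_zero (zpow_ne_zero _ (by norm_num))
    (zpow_ne_zero _ Complex.I_ne_zero)) (mul_ne_zero (by norm_num) ?_)) ?_
  · exact Complex.ofReal_ne_zero.2 (hfac _).ne'
  · exact Complex.ofReal_ne_zero.2 (Real.sqrt_pos.2 (div_pos (mul_pos (hfac _) (hfac _))
      (mul_pos (hfac _) (hfac _)))).ne'

theorem one_add_cos_cpow_mul_pow {β : ℝ} (hβ₀ : 0 ≤ β) (hβ : β ≤ π) (j : ℤ) :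
    (1 + (Real.cos β : ℂ)) ^ (-(j : ℂ) / 2) * (1 + (Real.cos β : ℂ)) ^ j.toNat =
      (√2 : ℂ) ^ j.natAbs * (Real.cos (β / 2) : ℂ) ^ j.natAbs := by
  have hcos : 0 ≤ Real.cos (β / 2) :=
    Real.cos_nonneg_of_neg_pi_div_two_le_of_le (by linarith) (by linarith)
  have hsq : 1 + Real.cos β = (√2 * Real.cos (β / 2)) ^ 2 := by
    rw [mul_pow, Real.sq_sqrt zero_le_two, Real.cos_sq, mul_div_cancel₀ _ two_ne_zero]
    ring
  rw [← Complex.ofReal_one, ← Complex.ofReal_add, hsq,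
    sq_cpow_neg_div_two_mul_pow_toNat (by positivity), Complex.ofReal_mul, mul_pow]

theorem one_sub_cos_cpow_mul_pow {β : ℝ} (hβ₀ : 0 ≤ β) (hβ : β ≤ π) (j : ℤ) :
    (1 - (Real.cos β : ℂ)) ^ (-(j : ℂ) / 2) * (1 - (Real.cos β : ℂ)) ^ j.toNat =
      (√2 : ℂ) ^ j.natAbs * (Real.sin (β / 2) : ℂ) ^ j.natAbs := by
  simpa [Real.cos_pi_sub, sub_div, Real.cos_pi_div_two_sub, ← sub_eq_add_neg] using
    one_add_cos_cpow_mul_pow (sub_nonneg.2 hβ) (sub_le_self π hβ₀) j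

theorem exists_wignerP_cos_eq {l : ℕ} {k m : ℤ} (hk : k.natAbs ≤ l) (hm : m.natAbs ≤ l) :
    ∃ (κ : ℂ) (Q : ℝ[X]), κ ≠ 0 ∧ Q ≠ 0 ∧ Q.natDegree = l - max k.natAbs m.natAbs ∧
      ∀ β, 0 ≤ β → β ≤ π → wignerP l k m (Real.cos β) =
        κ * (Real.cos (β / 2) : ℂ) ^ (k + m).natAbs * (Real.sin (β / 2) : ℂ) ^ (k - m).natAbs *
          (Q.eval (Real.cos β) : ℝ) := by
  obtain ⟨Q, hQ₀, hdeg, hQ⟩ := exists_iterate_derivative_one_sub_X_pow_mul_one_add_X_pow_eq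
    (a := ((l : ℤ) - k).toNat) (b := ((l : ℤ) + k).toNat) (j := ((l : ℤ) - m).toNat) (by omega)
  rw [show ((l : ℤ) - k).toNat - ((l : ℤ) - m).toNat = (m - k).toNat by omega,
    show ((l : ℤ) + k).toNat - ((l : ℤ) - m).toNat = (m + k).toNat by omega] at hQ
  refine ⟨wignerC l k m * (√2 : ℂ) ^ (m - k).natAbs * (√2 : ℂ) ^ (m + k).natAbs, Q,
    by simp [wignerC_ne_zero], hQ₀, by omega, fun β hβ₀ hβ => ?_⟩
  have hrodrigues : iteratedDeriv ((l : ℤ) - m).toNat (fun u : ℝ =>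
      (1 - u) ^ ((l : ℤ) - k).toNat * (1 + u) ^ ((l : ℤ) + k).toNat) (Real.cos β) =
      (1 - Real.cos β) ^ (m - k).toNat * (1 + Real.cos β) ^ (m + k).toNat *
        Q.eval (Real.cos β) := by
    have := congrFun (iteratedDeriv_eval ((1 - X) ^ ((l : ℤ) - k).toNat *
      (1 + X) ^ ((l : ℤ) + k).toNat) ((l : ℤ) - m).toNat) (Real.cos β)
    simpa [hQ] using this
  have hsub := one_sub_cos_cpow_mul_pow hβ₀ hβ (m - k)
  have hadd := one_add_cos_cpow_mul_pow hβ₀ hβ (m + k)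
  rw [wignerP, hrodrigues, add_comm k m, ← Int.natAbs_neg (k - m), neg_sub]
  simp only [Complex.ofReal_mul, Complex.ofReal_pow, Complex.ofReal_sub, Complex.ofReal_add,
    Complex.ofReal_one]
  generalize (1 - (Real.cos β : ℂ)) ^ (-((m - k : ℤ) : ℂ) / 2) = x at *
  generalize (1 + (Real.cos β : ℂ)) ^ (-((m + k : ℤ) : ℂ) / 2) = y at *
  calc _ = wignerC l k m * (x * (1 - (Real.cos β : ℂ)) ^ (m - k).toNat) *
        (y * (1 + (Real.cos β : ℂ)) ^ (m + k).toNat) * (Q.eval (Real.cos β) : ℝ) := by ring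
    _ = _ := by rw [hsub, hadd]; ring

/-- The harmonic polynomial `r ^ |n| * exp (i n θ)` of the plane, in `a = r * exp (i θ)`. -/
noncomputable def planeHarmonic (n : ℤ) (a : ℂ) : ℂ := a ^ n.toNat * conj a ^ (-n).toNat

theorem planeHarmonic_exp_mul (n : ℤ) (u r : ℝ) :
    planeHarmonic n (Complex.exp (-u * Complex.I) * r) =
      Complex.exp (-(n : ℂ) * u * Complex.I) * (r : ℂ) ^ n.natAbs := by
  have hconj : conj (Complex.exp (-u * Complex.I) * r) = Complex.exp (u * Complex.I) * r := by
    rw [map_mul, ← Complex.exp_conj]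
    simp
  rw [planeHarmonic, hconj, mul_pow, mul_pow, ← Complex.exp_nat_mul, ← Complex.exp_nat_mul,
    mul_mul_mul_comm, ← Complex.exp_add, ← pow_add, show n.toNat + (-n).toNat = n.natAbs by omega]
  congr 2
  have hn : (n : ℂ) = n.toNat - (-n).toNat := by exact_mod_cast (Int.toNat_sub_toNat_neg n).symm
  rw [hn]
  ring

/-- The first Cayley–Klein parameter of a quaternion. -/
def cayleyKleinA (q : ℍ[ℝ]) : ℂ := ⟨q.re, -q.imK⟩

/-- The second Cayley–Klein parameter of a quaternion. -/
def cayleyKleinB (q : ℍ[ℝ]) : ℂ := ⟨q.imI, -q.imJ⟩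

theorem cayleyKleinA_eulerQuaternion (α β γ : ℝ) :
    cayleyKleinA (eulerQuaternion α β γ) =
      Complex.exp (-((α + γ) / 2 : ℝ) * Complex.I) * Real.cos (β / 2) := by
  rw [← Complex.ofReal_neg, mul_comm]
  apply Complex.ext
  · rw [Complex.re_ofReal_mul, Complex.exp_ofReal_mul_I_re, Real.cos_neg, mul_comm]
    rfl
  · rw [Complex.im_ofReal_mul, Complex.exp_ofReal_mul_I_im, Real.sin_neg, mul_neg, mul_comm]
    rfl

theorem cayleyKleinB_eulerQuaternion (α β γ : ℝ) :
    cayleyKleinB (eulerQuaternion α β γ) =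
      Complex.exp (-((α - γ) / 2 : ℝ) * Complex.I) * Real.sin (β / 2) := by
  rw [← Complex.ofReal_neg, mul_comm]
  apply Complex.ext
  · rw [Complex.re_ofReal_mul, Complex.exp_ofReal_mul_I_re, Real.cos_neg, mul_comm]
    rfl
  · rw [Complex.im_ofReal_mul, Complex.exp_ofReal_mul_I_im, Real.sin_neg, mul_neg, mul_comm]
    rfl

theorem cayleyKleinA_mul_conj {q : ℍ[ℝ]} (hq : ‖q‖ = 1) :
    cayleyKleinA q * conj (cayleyKleinA q) = (1 + rotationMatrix q 2 2) / 2 := by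
  have hsq := sum_sq_eq_one_of_norm_eq_one hq
  rw [Complex.mul_conj, cayleyKleinA, Complex.normSq_mk]
  simp only [rotationMatrix, Matrix.of_apply, Matrix.cons_val]
  norm_cast
  linarith

theorem cayleyKleinB_mul_conj {q : ℍ[ℝ]} (hq : ‖q‖ = 1) :
    cayleyKleinB q * conj (cayleyKleinB q) = (1 - rotationMatrix q 2 2) / 2 := by
  have hsq := sum_sq_eq_one_of_norm_eq_one hq
  rw [Complex.mul_conj, cayleyKleinB, Complex.normSq_mk]
  simp only [rotationMatrix, Matrix.of_apply, Matrix.cons_val]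
  norm_cast
  linarith

variable {D : ℕ → ℤ → ℤ → Mat3 → ℂ} {l : ℕ} {k m : ℤ}

theorem wignerDFormula_phase (α γ : ℝ) :
    Complex.exp (-(k : ℂ) * α * Complex.I) * Complex.exp (-(m : ℂ) * γ * Complex.I) =
      Complex.exp (-((k + m : ℤ) : ℂ) * ((α + γ) / 2 : ℝ) * Complex.I) *
        Complex.exp (-((k - m : ℤ) : ℂ) * ((α - γ) / 2 : ℝ) * Complex.I) := by
  rw [← Complex.exp_add, ← Complex.exp_add]
  congr 1
  push_cast
  ring

theorem IsWignerFamily.exists_eq_planeHarmonic_mul (hD : IsWignerFamily D) (hk : k.natAbs ≤ l)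
    (hm : m.natAbs ≤ l) :
    ∃ (κ : ℂ) (Q : ℝ[X]), κ ≠ 0 ∧ Q ≠ 0 ∧ Q.natDegree = l - max k.natAbs m.natAbs ∧
      ∀ q : ℍ[ℝ], ‖q‖ = 1 → D l k m (rotationMatrix q) =
        κ * (planeHarmonic (k + m) (cayleyKleinA q) * planeHarmonic (k - m) (cayleyKleinB q) *
          (Q.eval (rotationMatrix q 2 2) : ℝ)) := by
  obtain ⟨κ, Q, hκ, hQ, hdeg, hP⟩ := exists_wignerP_cos_eq hk hm
  refine ⟨κ, Q, hκ, hQ, hdeg, fun q hq => ?_⟩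
  obtain ⟨α, β, γ, hβ₀, hβ, rfl⟩ := exists_eulerQuaternion_eq hq
  have hentry : rotationMatrix (eulerQuaternion α β γ) 2 2 = Real.cos β := by
    simp [rotationMatrix_eulerQuaternion, Rz, Rx, Matrix.mul_apply, Fin.sum_univ_three]
  rw [hentry, rotationMatrix_eulerQuaternion,
    hD l k m (by omega) (by omega) (by omega) (by omega) α β γ hβ₀ hβ, wignerDFormula,
    hP β hβ₀ hβ, cayleyKleinA_eulerQuaternion, cayleyKleinB_eulerQuaternion,
    planeHarmonic_exp_mul, planeHarmonic_exp_mul, mul_right_comm, wignerDFormula_phase]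
  ring

theorem continuous_cayleyKleinA : Continuous cayleyKleinA :=
  Complex.equivRealProdCLM.symm.continuous.comp
    (Quaternion.continuous_re.prodMk Quaternion.continuous_imK.neg)

theorem continuous_cayleyKleinB : Continuous cayleyKleinB :=
  Complex.equivRealProdCLM.symm.continuous.comp
    (Quaternion.continuous_imI.prodMk Quaternion.continuous_imJ.neg)

theorem continuous_planeHarmonic (n : ℤ) : Continuous (planeHarmonic n) :=
  (continuous_pow _).mul (Complex.continuous_conj.pow _)

theorem IsWignerFamily.continuous (hD : IsWignerFamily D) (hk : k.natAbs ≤ l)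
    (hm : m.natAbs ≤ l) : Continuous fun z : SO3 => D l k m z := by
  obtain ⟨κ, Q, -, -, -, h⟩ := hD.exists_eq_planeHarmonic_mul hk hm
  refine isQuotientMap_quaternionCover.continuous_iff.2 ?_
  have hcomp : (fun z : SO3 => D l k m z) ∘ quaternionCover = fun q : sphere (0 : ℍ[ℝ]) 1 => κ *
      (planeHarmonic (k + m) (cayleyKleinA q) * planeHarmonic (k - m) (cayleyKleinB q) *
        (Q.eval (rotationMatrix q 2 2) : ℝ)) :=
    funext fun q : sphere (0 : ℍ[ℝ]) 1 => h q (mem_sphere_zero_iff_norm.1 q.property)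
  have hentry : Continuous fun q : ℍ[ℝ] => rotationMatrix q 2 2 :=
    continuous_rotationMatrix.matrix_elem 2 2
  rw [hcomp]
  exact (continuous_const.mul ((((continuous_planeHarmonic _).comp continuous_cayleyKleinA).mul
    ((continuous_planeHarmonic _).comp continuous_cayleyKleinB)).mul
    (Complex.continuous_ofReal.comp (Q.continuous.comp hentry)))).comp continuous_subtype_val

end WignerFormula

section WignerSpan

open Polynomial
open scoped Quaternion ComplexConjugate Pointwise

/-- The space of functions on `SO3` spanned by the Wigner functions of degree at most `N` of the
family `D`. -/
def wignerSpan (D : ℕ → ℤ → ℤ → Mat3 → ℂ) (N : ℕ) : Submodule ℂ (SO3 → ℂ) :=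
  Submodule.span ℂ
    {f | ∃ l ≤ N, ∃ k m : ℤ, k.natAbs ≤ l ∧ m.natAbs ≤ l ∧ f = fun z : SO3 => D l k m z}

variable {D : ℕ → ℤ → ℤ → Mat3 → ℂ} {N : ℕ}

theorem degree_sub_C_mul_lt {K : Type*} [Field K] {d : ℕ} {q Q : K[X]}
    (hq : q.degree < (d + 1 : ℕ)) (hQ : Q ≠ 0) (hdeg : Q.natDegree = d) :
    (q - C (q.coeff d / Q.coeff d) * Q).degree < d := by
  have hlead : Q.coeff d ≠ 0 := hdeg ▸ leadingCoeff_ne_zero.2 hQ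
  refine (degree_lt_iff_coeff_zero _ _).2 fun i hi => ?_
  rw [coeff_sub, coeff_C_mul]
  rcases hi.eq_or_lt with rfl | hlt
  · rw [div_mul_cancel₀ _ hlead, sub_self]
  · rw [(degree_lt_iff_coeff_zero q (d + 1)).1 hq i hlt,
      coeff_eq_zero_of_natDegree_lt (hdeg.trans_lt hlt), mul_zero, sub_zero]

-- For fixed `k` and `m` the Wigner functions of degrees `l = max |k| |m| + d` carry polynomial
-- factors of exact degree `d`, so these factors span all polynomials of bounded degree.
theorem IsWignerFamily.planeHarmonic_mul_eval_mem_wignerSpan (hD : IsWignerFamily D) (k m : ℤ)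
    {d : ℕ} (hd : max k.natAbs m.natAbs + d ≤ N + 1) {q : ℝ[X]} (hq : q.degree < d) :
    (fun z : SO3 => planeHarmonic (k + m) (cayleyKleinA (quaternionLift z)) *
      planeHarmonic (k - m) (cayleyKleinB (quaternionLift z)) *
        (q.eval ((z : Mat3) 2 2) : ℝ)) ∈ wignerSpan D N := by
  induction d generalizing q with
  | zero =>
    obtain rfl : q = 0 := degree_eq_bot.1 (Nat.WithBot.lt_zero_iff.1 (by exact_mod_cast hq))
    simp only [eval_zero, Complex.ofReal_zero, mul_zero]
    exact zero_mem _
  | succ d ih =>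
    obtain ⟨κ, Q, hκ, hQ, hdeg, hform⟩ := hD.exists_eq_planeHarmonic_mul
      (l := max k.natAbs m.natAbs + d) (k := k) (m := m) (by omega) (by omega)
    have hrest := ih (by omega) (degree_sub_C_mul_lt hq hQ (by omega))
    have hD_mem : (fun z : SO3 => D (max k.natAbs m.natAbs + d) k m z) ∈ wignerSpan D N :=
      Submodule.subset_span ⟨_, by omega, k, m, by omega, by omega, rfl⟩
    convert add_mem hrest (Submodule.smul_mem _ (((q.coeff d / Q.coeff d : ℝ) : ℂ) / κ) hD_mem)
      using 1
    funext z
    have hz := hform _ (norm_quaternionLift z)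
    rw [rotationMatrix_quaternionLift] at hz
    simp only [Pi.add_apply, Pi.smul_apply, smul_eq_mul, hz, eval_sub, eval_mul, eval_C,
      Complex.ofReal_sub, Complex.ofReal_mul]
    field_simp
    ring

theorem pow_mul_conj_pow (a : ℂ) (p q : ℕ) :
    a ^ p * conj a ^ q = planeHarmonic (p - q) a * (a * conj a) ^ min p q := by
  rw [planeHarmonic, mul_pow, mul_mul_mul_comm, ← pow_add, ← pow_add]
  congr 2 <;> omega

/-- The Cayley–Klein parameters of the chosen quaternion lift, and their conjugates. -/
noncomputable def cayleyKleinCoordinates : Set (SO3 → ℂ) :=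
  {fun z => cayleyKleinA (quaternionLift z), fun z => conj (cayleyKleinA (quaternionLift z)),
    fun z => cayleyKleinB (quaternionLift z), fun z => conj (cayleyKleinB (quaternionLift z))}

theorem exists_eq_of_mem_cayleyKleinCoordinates_pow {d : ℕ} {f : SO3 → ℂ}
    (hf : f ∈ cayleyKleinCoordinates ^ d) :
    ∃ p q r s : ℕ, p + q + r + s = d ∧ f = fun z =>
      cayleyKleinA (quaternionLift z) ^ p * conj (cayleyKleinA (quaternionLift z)) ^ q *
        (cayleyKleinB (quaternionLift z) ^ r * conj (cayleyKleinB (quaternionLift z)) ^ s) := by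
  induction d generalizing f with
  | zero => exact ⟨0, 0, 0, 0, rfl, by simpa [Pi.one_def] using hf⟩
  | succ d ih =>
    obtain ⟨g, hg, u, hu, rfl⟩ := Set.mem_mul.1 (pow_succ cayleyKleinCoordinates d ▸ hf)
    obtain ⟨p, q, r, s, rfl, rfl⟩ := ih hg
    rcases hu with rfl | rfl | rfl | rfl
    · exact ⟨p + 1, q, r, s, by ring, funext fun z => by simp only [Pi.mul_apply]; ring⟩
    · exact ⟨p, q + 1, r, s, by ring, funext fun z => by simp only [Pi.mul_apply]; ring⟩
    · exact ⟨p, q, r + 1, s, by ring, funext fun z => by simp only [Pi.mul_apply]; ring⟩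
    · exact ⟨p, q, r, s + 1, by ring, funext fun z => by simp only [Pi.mul_apply]; ring⟩

theorem IsWignerFamily.cayleyKlein_monomial_mem_wignerSpan (hD : IsWignerFamily D)
    {p q r s j : ℕ} (hj : j ≤ N) (hdeg : p + q + r + s = 2 * j) :
    (fun z => cayleyKleinA (quaternionLift z) ^ p * conj (cayleyKleinA (quaternionLift z)) ^ q *
      (cayleyKleinB (quaternionLift z) ^ r * conj (cayleyKleinB (quaternionLift z)) ^ s)) ∈
        wignerSpan D N := by
  obtain ⟨k, hk⟩ : ∃ k : ℤ, (p : ℤ) - q + (r - s) = 2 * k := ⟨j - q - s, by omega⟩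
  obtain ⟨m, hm⟩ : ∃ m : ℤ, (p : ℤ) - q - (r - s) = 2 * m := ⟨k - (r - s), by omega⟩
  set Q : ℝ[X] := (C (1 / 2) * (1 + X)) ^ min p q * (C (1 / 2) * (1 - X)) ^ min r s with hQ
  have hQdeg : Q.natDegree ≤ min p q + min r s := by
    have hadd : (C (1 / 2 : ℝ) * (1 + X)).natDegree ≤ 1 := by compute_degree
    have hsub : (C (1 / 2 : ℝ) * (1 - X)).natDegree ≤ 1 := by compute_degree
    rw [← mul_one (min p q), ← mul_one (min r s)]
    exact natDegree_mul_le_of_le (natDegree_pow_le_of_le _ hadd) (natDegree_pow_le_of_le _ hsub)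
  convert hD.planeHarmonic_mul_eval_mem_wignerSpan (N := N) k m (d := min p q + min r s + 1)
    (by omega) (q := Q) (degree_le_natDegree.trans_lt (by exact_mod_cast Nat.lt_succ_of_le hQdeg))
    using 2 with z
  rw [pow_mul_conj_pow, pow_mul_conj_pow, cayleyKleinA_mul_conj (norm_quaternionLift z),
    cayleyKleinB_mul_conj (norm_quaternionLift z), rotationMatrix_quaternionLift,
    show (p : ℤ) - q = k + m by omega, show (r : ℤ) - s = k - m by omega, hQ]
  simp only [eval_mul, eval_pow, eval_C, eval_add, eval_sub, eval_one, eval_X]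
  push_cast
  ring

theorem IsWignerFamily.span_cayleyKleinCoordinates_pow_le (hD : IsWignerFamily D) {j : ℕ}
    (hj : j ≤ N) : Submodule.span ℂ cayleyKleinCoordinates ^ (2 * j) ≤ wignerSpan D N := by
  rw [Submodule.span_pow, Submodule.span_le]
  intro f hf
  obtain ⟨p, q, r, s, hdeg, rfl⟩ := exists_eq_of_mem_cayleyKleinCoordinates_pow hf
  exact hD.cayleyKlein_monomial_mem_wignerSpan hj hdeg

theorem inner_quaternionLift_mem_span_cayleyKleinCoordinates (v : ℍ[ℝ]) :
    (fun z : SO3 => ((inner ℝ v (quaternionLift z) : ℝ) : ℂ)) ∈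
      Submodule.span ℂ cayleyKleinCoordinates := by
  have hmem (f) (hf : f ∈ cayleyKleinCoordinates) (w : ℂ) :
      w • f ∈ Submodule.span ℂ cayleyKleinCoordinates :=
    Submodule.smul_mem _ w (Submodule.subset_span hf)
  convert add_mem
    (add_mem (hmem _ (.inl rfl) (conj (cayleyKleinA v) / 2))
      (hmem _ (.inr (.inl rfl)) (cayleyKleinA v / 2)))
    (add_mem (hmem _ (.inr (.inr (.inl rfl))) (conj (cayleyKleinB v) / 2))
      (hmem _ (.inr (.inr (.inr rfl))) (cayleyKleinB v / 2))) using 1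
  funext z
  simp only [Pi.add_apply, Pi.smul_apply, smul_eq_mul]
  apply Complex.ext <;> simp [cayleyKleinA, cayleyKleinB, Quaternion.inner_def] <;> ring

theorem coeff_eq_zero_of_odd_of_eval_neg {F : ℝ[X]} (hF : ∀ t, F.eval (-t) = F.eval t) {i : ℕ}
    (hi : Odd i) : F.coeff i = 0 := by
  have hcomp : F.comp (C (-1) * X) = F := Polynomial.funext fun t => by simp [hF]
  have hcoeff := congrArg (fun G => G.coeff i) hcomp
  simp only [comp_C_mul_X_coeff, hi.neg_one_pow] at hcoeff
  linarith

theorem IsWignerFamily.bump_quaternionLift_mem_wignerSpan (hD : IsWignerFamily D) {F : ℝ[X]}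
    (heven : ∀ t, F.eval (-t) = F.eval t) (hdeg : F.natDegree + 2 ≤ 2 * N) (a : ℝ) (e V : ℍ[ℝ]) :
    (fun z : SO3 => ((bump F a e V (quaternionLift z) : ℝ) : ℂ)) ∈ wignerSpan D N := by
  set u : SO3 → ℂ := fun z => ((inner ℝ e (quaternionLift z) : ℝ) : ℂ) with hu
  set v : SO3 → ℂ := fun z => ((inner ℝ V (quaternionLift z) : ℝ) : ℂ) with hv
  have hexpand : (fun z : SO3 => ((bump F a e V (quaternionLift z) : ℝ) : ℂ)) =
      ∑ i ∈ Finset.range (F.natDegree + 1),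
        (F.coeff i : ℂ) • ((a : ℂ) • u ^ i + (2 : ℂ) • (u ^ (i + 1) * v)) := by
    funext z
    simp only [bump, eval_eq_sum_range, hu, hv, Finset.sum_apply, Pi.add_apply, Pi.smul_apply,
      Pi.mul_apply, Pi.pow_apply, smul_eq_mul, Finset.mul_sum]
    push_cast
    exact Finset.sum_congr rfl fun i _ => by ring
  rw [hexpand]
  refine sum_mem fun i hi => ?_
  have hi_le := Finset.mem_range.1 hi
  rcases i.even_or_odd with ⟨j, rfl⟩ | hodd
  · have hu_mem := inner_quaternionLift_mem_span_cayleyKleinCoordinates e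
    have hv_mem := inner_quaternionLift_mem_span_cayleyKleinCoordinates V
    refine Submodule.smul_mem _ _ (add_mem (Submodule.smul_mem _ _ ?_) (Submodule.smul_mem _ _ ?_))
    · exact hD.span_cayleyKleinCoordinates_pow_le (j := j) (by omega)
        (two_mul j ▸ Submodule.pow_mem_pow _ hu_mem _)
    · have hmul := Submodule.mul_mem_mul (Submodule.pow_mem_pow _ hu_mem (j + j + 1)) hv_mem
      rw [← pow_succ, show j + j + 1 + 1 = 2 * (j + 1) by ring] at hmul
      exact hD.span_cayleyKleinCoordinates_pow_le (by omega) hmul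
  · simp [coeff_eq_zero_of_odd_of_eval_neg heven hodd]

theorem natDegree_jacksonKernel_le (n : ℕ) : (jacksonKernel n).natDegree ≤ 8 * n :=
  natDegree_pow_le_of_le 8
    ((natDegree_C_mul_le _ _).trans (Chebyshev.natDegree_U_natCast ℝ n).le)

theorem IsWignerFamily.bumpSum_quaternionLift_mem_wignerSpan (hD : IsWignerFamily D) {n : ℕ}
    (hn : 4 * n + 1 ≤ N) {ι : Type*} [Fintype ι] (a : ι → ℝ) (p V : ι → ℍ[ℝ]) :
    (fun z : SO3 => ((bumpSum (jacksonKernel n) a p V (quaternionLift z) : ℝ) : ℂ)) ∈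
      wignerSpan D N := by
  have hdeg : (jacksonKernel n).natDegree + 2 ≤ 2 * N :=
    (Nat.add_le_add_right (natDegree_jacksonKernel_le n) 2).trans (by omega)
  convert sum_mem (t := Finset.univ) fun j _ => hD.bump_quaternionLift_mem_wignerSpan
    (F := jacksonKernel n) eval_neg_jacksonKernel hdeg (a j) (p j) (V j) using 1
  funext z
  simp only [bumpSum, Complex.ofReal_sum, Finset.sum_apply]

end WignerSpan

section Duality

open MeasureTheory Set
open scoped ENNReal

variable {α ι : Type*} [MeasurableSpace α] {η μ ν : SignedMeasure α} {x : ι → α} {q : α → ℝ}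
  {s : Set α}

instance isFiniteMeasure_variation (μ : SignedMeasure α) : IsFiniteMeasure μ.variation :=
  μ.totalVariation_eq_variation ▸ inferInstance

theorem enorm_setIntegral_signedMeasure_le (hs : MeasurableSet s) :
    ‖∫ᵛ z in s, q z ∂<•η‖ₑ ≤ ∫⁻ z in s, ‖q z‖ₑ ∂η.variation := by
  have hnorm : ‖(ContinuousLinearMap.lsmul ℝ ℝ (E := ℝ)).flip‖ₑ ≤ 1 := by
    rw [← enorm_one (G := ℝ), enorm_le_iff_norm_le, ContinuousLinearMap.opNorm_flip, norm_one]
    exact ContinuousLinearMap.opNorm_lsmul_le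
  calc ‖∫ᵛ z in s, q z ∂<•η‖ₑ
      ≤ ‖(ContinuousLinearMap.lsmul ℝ ℝ (E := ℝ)).flip‖ₑ *
          ∫⁻ z, ‖q z‖ₑ ∂(η.restrict s).variation := VectorMeasure.enorm_integral_le_lintegral_enorm
    _ ≤ ∫⁻ z in s, ‖q z‖ₑ ∂η.variation := by
        rw [VectorMeasure.variation_restrict hs]
        exact mul_le_of_le_one_left zero_le hnorm

theorem enorm_setIntegral_signedMeasure_lt (hs : MeasurableSet s) (hq : η.Integrable q)
    (hlt : ∀ z ∈ s, |q z| < 1) (hη : η.variation s ≠ 0) :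
    ‖∫ᵛ z in s, q z ∂<•η‖ₑ < η.variation s := by
  have hfin : ∫⁻ z in s, ‖q z‖ₑ ∂η.variation ≠ ∞ :=
    (MeasureTheory.Integrable.integrableOn hq).hasFiniteIntegral.ne
  calc ‖∫ᵛ z in s, q z ∂<•η‖ₑ
      ≤ ∫⁻ z in s, ‖q z‖ₑ ∂η.variation := enorm_setIntegral_signedMeasure_le hs
    _ < ∫⁻ _ in s, 1 ∂η.variation :=
        setLIntegral_strict_mono hs hη measurable_const hfin <| .of_forall fun z (hz : z ∈ s) => by
          simpa [Real.enorm_eq_ofReal_abs] using hlt z hz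
    _ = η.variation s := setLIntegral_one s

theorem variation_univ_lt_of_variation_sub_lt_compl (hs : MeasurableSet s)
    (hν : ν.variation sᶜ = 0) (hlt : (μ - ν).variation s < (μ - ν).variation sᶜ) :
    ν.variation univ < μ.variation univ :=
  calc ν.variation univ = (μ - (μ - ν)).variation s := by
        rw [← measure_add_measure_compl hs, hν, add_zero, sub_sub_cancel]
    _ ≤ μ.variation s + (μ - ν).variation s := VectorMeasure.variation_sub_le s
    _ < μ.variation s + (μ - ν).variation sᶜ := ENNReal.add_lt_add_left (measure_ne_top _ _) hlt
    _ ≤ μ.variation s + (μ.variation sᶜ + ν.variation sᶜ) := by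
        gcongr
        exact VectorMeasure.variation_sub_le sᶜ
    _ = μ.variation univ := by rw [hν, add_zero, measure_add_measure_compl hs]

variable [MeasurableSingletonClass α]

theorem variation_singleton (η : SignedMeasure α) (z : α) : η.variation {z} = ‖η {z}‖ₑ := by
  refine le_antisymm ?_ (η.enorm_measure_le_variation {z})
  calc η.variation {z} ≤ (‖η {z}‖ₑ • Measure.dirac z) {z} := by
        refine VectorMeasure.variation_apply_le_of_forall_enorm_le (measurableSet_singleton z)
          fun E _ hE => ?_
        rcases subset_singleton_iff_eq.1 hE with rfl | rfl <;> simp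
    _ = ‖η {z}‖ₑ := by simp

theorem variation_range [Fintype ι] (η : SignedMeasure α) (hx : x.Injective) :
    η.variation (range x) = ∑ i, ‖η {x i}‖ₑ := by
  rw [← iUnion_singleton_eq_range, measure_iUnion
    (fun i j hij => disjoint_singleton.2 (hx.ne hij)) fun i => measurableSet_singleton _,
    tsum_fintype]
  simp only [variation_singleton]

theorem setIntegral_range_signedMeasure [Fintype ι] (hx : x.Injective) (hq : η.Integrable q) :
    ∫ᵛ z in range x, q z ∂<•η = ∑ i, q (x i) * η {x i} := by
  rw [← iUnion_singleton_eq_range, VectorMeasure.setIntegral_iUnion_fintype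
    (fun i => measurableSet_singleton _)
    (fun i j hij => disjoint_singleton.2 (hx.ne hij)) fun i => hq.integrableOn]
  refine Finset.sum_congr rfl fun i _ => ?_
  rw [VectorMeasure.setIntegral_congr_fun (g := fun _ => q (x i)) (by rintro _ rfl; rfl),
    VectorMeasure.integral_const, VectorMeasure.restrict_apply _ (measurableSet_singleton _) .univ]
  simp [mul_comm]

theorem variation_sum_smul_dirac_compl_range [Fintype ι] (c : ι → ℝ) (x : ι → α) :
    (∑ i, c i • (Measure.dirac (x i)).toSignedMeasure).variation (range x)ᶜ = 0 := by
  refine (VectorMeasure.variation_apply_eq_zero (finite_range x).measurableSet.compl).2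
    fun t ht htm => ?_
  rw [← FunLike.coeAddMonoidHom_apply, map_sum, Finset.sum_apply]
  refine Finset.sum_eq_zero fun i _ => ?_
  have hxt : x i ∉ t := fun h => ht h (mem_range_self i)
  simp [Measure.toSignedMeasure_apply_measurable htm, Measure.real, htm, hxt]

theorem variation_range_eq_enorm_setIntegral_compl [Finite ι] (hx : x.Injective)
    (hq : η.Integrable q) (hsign : ∀ i, q (x i) * η {x i} = |η {x i}|)
    (hint : ∫ᵛ z, q z ∂<•η = 0) :
    η.variation (range x) = ‖∫ᵛ z in (range x)ᶜ, q z ∂<•η‖ₑ := by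
  have := Fintype.ofFinite ι
  have hsum : ∑ i, |η {x i}| = -∫ᵛ z in (range x)ᶜ, q z ∂<•η := by
    rw [eq_neg_iff_add_eq_zero, ← hint,
      ← VectorMeasure.setIntegral_add_compl (finite_range x).measurableSet hq,
      setIntegral_range_signedMeasure hx hq]
    simp only [hsign]
  rw [← enorm_neg, ← hsum, variation_range η hx,
    Real.enorm_of_nonneg (Finset.sum_nonneg fun i _ => abs_nonneg _),
    ENNReal.ofReal_sum_of_nonneg fun i _ => abs_nonneg _]
  simp only [Real.enorm_eq_ofReal_abs]

theorem variation_range_lt_variation_compl [Finite ι] (hx : x.Injective) (hq : η.Integrable q)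
    (hsign : ∀ i, q (x i) * η {x i} = |η {x i}|) (hlt : ∀ z ∉ range x, |q z| < 1)
    (hint : ∫ᵛ z, q z ∂<•η = 0) (hη : η ≠ 0) :
    η.variation (range x) < η.variation (range x)ᶜ := by
  have hS : MeasurableSet (range x) := (finite_range x).measurableSet
  rw [variation_range_eq_enorm_setIntegral_compl hx hq hsign hint]
  refine enorm_setIntegral_signedMeasure_lt hS.compl hq hlt fun hcompl => hη ?_
  have hrange : η.variation (range x) = 0 := by
    rw [variation_range_eq_enorm_setIntegral_compl hx hq hsign hint, ← le_zero_iff]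
    exact (enorm_setIntegral_signedMeasure_le hS.compl).trans_eq
      (setLIntegral_measure_zero _ _ hcompl)
  rw [← VectorMeasure.variation_eq_zero, ← Measure.measure_univ_eq_zero,
    ← measure_add_measure_compl hS, hrange, hcompl, add_zero]

end Duality

section Recovery

open MeasureTheory Set
open scoped Quaternion

variable {D : ℕ → ℤ → ℤ → Mat3 → ℂ} {N : ℕ} {μ ν : SignedMeasure SO3}

theorem integrable_SO3_of_continuous {F : Type*} [NormedAddCommGroup F] {f : SO3 → F}
    (hf : Continuous f) (κ : Measure SO3) [IsFiniteMeasure κ] : Integrable f κ :=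
  hf.integrable_of_hasCompactSupport (HasCompactSupport.of_compactSpace f)

theorem pairSM_ofReal (μ : SignedMeasure SO3) {q : SO3 → ℝ} (hq : Continuous q) :
    pairSM μ (fun z => (q z : ℂ)) = ((∫ᵛ z, q z ∂<•μ : ℝ) : ℂ) := by
  have hint (κ : Measure SO3) [IsFiniteMeasure κ] : κ.toSignedMeasure.Integrable q :=
    integrable_SO3_of_continuous hq _
  conv_rhs => rw [← μ.toSignedMeasure_toJordanDecomposition, JordanDecomposition.toSignedMeasure,
    VectorMeasure.integral_sub_vectorMeasure (hint _) (hint _)]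
  simp only [VectorMeasure.integral_toSignedMeasure, Complex.ofReal_sub, pairSM,
    integral_complex_ofReal]

theorem IsWignerFamily.continuous_of_mem_wignerSpan (hD : IsWignerFamily D) {f : SO3 → ℂ}
    (hf : f ∈ wignerSpan D N) : Continuous f := by
  induction hf using Submodule.span_induction with
  | mem f hf =>
    obtain ⟨l, -, k, m, hk, hm, rfl⟩ := hf
    exact hD.continuous hk hm
  | zero => exact continuous_zero
  | add f g _ _ hf hg => exact hf.add hg
  | smul a f _ hf => exact hf.const_smul a

theorem IsWignerFamily.pairSM_eq_of_mem_wignerSpan (hD : IsWignerFamily D)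
    (hmom : ∀ l ≤ N, ∀ k m : ℤ, k.natAbs ≤ l → m.natAbs ≤ l →
      pairSM μ (fun z => D l k m z) = pairSM ν fun z => D l k m z)
    {f : SO3 → ℂ} (hf : f ∈ wignerSpan D N) : pairSM μ f = pairSM ν f := by
  induction hf using Submodule.span_induction with
  | mem f hf =>
    obtain ⟨l, hl, k, m, hk, hm, rfl⟩ := hf
    exact hmom l hl k m hk hm
  | zero => simp [pairSM]
  | add f g hf hg ihf ihg =>
    have hadd (κ : SignedMeasure SO3) : pairSM κ (f + g) = pairSM κ f + pairSM κ g := by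
      have hf' := integrable_SO3_of_continuous (hD.continuous_of_mem_wignerSpan hf)
      have hg' := integrable_SO3_of_continuous (hD.continuous_of_mem_wignerSpan hg)
      simp only [pairSM, integral_add' (hf' _) (hg' _)]
      ring
    rw [hadd, hadd, ihf, ihg]
  | smul a f _ ihf =>
    have hsmul (κ : SignedMeasure SO3) : pairSM κ (a • f) = a * pairSM κ f := by
      simp only [pairSM, Pi.smul_apply, smul_eq_mul, integral_const_mul, mul_sub]
    rw [hsmul, hsmul, ihf]

theorem isSeparatedOnSphere_quaternionLift {n : ℕ} (hn : 4 ≤ n) (hN : N ≤ 4 * (n + 1))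
    {ι : Type*} {x : ι → SO3}
    (hsep : Pairwise fun i j => 36 / ((N : ℝ) + 1) ≤ rotAngle ((x j : Mat3)⁻¹ * (x i : Mat3))) :
    IsSeparatedOnSphere n fun i => quaternionLift (x i) := by
  refine ⟨fun i => norm_quaternionLift _, fun i j hij => ?_⟩
  have hangle : rotAngle ((x i : Mat3)⁻¹ * (x j : Mat3)) =
      2 * lineAngle (quaternionLift (x i)) (quaternionLift (x j)) := by
    rw [← rotAngle_inv_rotationMatrix_mul (norm_quaternionLift _) (norm_quaternionLift _),
      rotationMatrix_quaternionLift, rotationMatrix_quaternionLift]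
  have hbound : 2 * (30 / 7 / ((n : ℝ) + 1)) ≤ 36 / ((N : ℝ) + 1) := by
    have hn' : (4 : ℝ) ≤ n := by exact_mod_cast hn
    have hN' : (N : ℝ) ≤ 4 * (n + 1) := by exact_mod_cast hN
    rw [div_div, mul_div_assoc', div_le_div_iff₀ (by positivity) (by positivity)]
    linarith
  linarith [hsep hij.symm]

theorem IsWignerFamily.exists_mem_wignerSpan_eq_and_abs_lt_one (hD : IsWignerFamily D)
    (hN : 20 ≤ N) {ι : Type*} [Finite ι] {x : ι → SO3}
    (hsep : Pairwise fun i j => 36 / ((N : ℝ) + 1) ≤ rotAngle ((x j : Mat3)⁻¹ * (x i : Mat3)))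
    {s : ι → ℝ} (hs : ∀ i, |s i| = 1) :
    ∃ q : SO3 → ℝ, (fun z => (q z : ℂ)) ∈ wignerSpan D N ∧ (∀ i, q (x i) = s i) ∧
      ∀ z ∉ range x, |q z| < 1 := by
  have := Fintype.ofFinite ι
  obtain ⟨n, hn, hnN, hNn⟩ : ∃ n, 4 ≤ n ∧ 4 * n + 1 ≤ N ∧ N ≤ 4 * (n + 1) :=
    ⟨(N - 1) / 4, by omega, by omega, by omega⟩
  have hp := isSeparatedOnSphere_quaternionLift hn hNn hsep
  obtain ⟨a, V, hsign, hlt⟩ :=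
    exists_bumpSum_eq_and_abs_lt_one hn Quaternion.finrank_eq_four hp hs
  refine ⟨_, hD.bumpSum_quaternionLift_mem_wignerSpan hnN a _ V, hsign, fun z hz => ?_⟩
  refine hlt _ (norm_quaternionLift z) fun i => (lineAngle_nonneg _ _).lt_of_ne' fun h => hz ?_
  have hR := rotationMatrix_eq_of_lineAngle_eq_zero (norm_quaternionLift _)
    (norm_quaternionLift _) h
  rw [rotationMatrix_quaternionLift, rotationMatrix_quaternionLift] at hR
  exact ⟨i, Subtype.ext hR⟩

theorem exists_abs_eq_one_and_mul_eq_abs (t : ℝ) : ∃ s : ℝ, |s| = 1 ∧ s * t = |t| := by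
  rcases abs_choice t with h | h
  · exact ⟨1, abs_one, by rw [h, one_mul]⟩
  · exact ⟨-1, by simp, by rw [h, neg_one_mul]⟩

end Recovery

open MeasureTheory in
theorem exact_recovery_from_wigner_moments
    (N : ℕ) (hN : 20 ≤ N)
    (M : ℕ) (c : Fin M → ℝ) (hc : ∀ i, c i ≠ 0)
    (x : Fin M → SO3) (hinj : Function.Injective x)
    (hsep : ∀ i j, i ≠ j →
      36 / ((N : ℝ) + 1) ≤ rotAngle (((x j : Mat3))⁻¹ * ((x i : Mat3))))
    (D : ℕ → ℤ → ℤ → Mat3 → ℂ) (hD : IsWignerFamily D)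
    (μ : SignedMeasure SO3)
    (hmom : ∀ l : ℕ, l ≤ N → ∀ k m : ℤ, -(l : ℤ) ≤ k → k ≤ l → -(l : ℤ) ≤ m → m ≤ l →
      pairSM μ (fun z => D l k m (z : Mat3)) =
        pairSM (∑ i, c i • diracSM (x i)) (fun z => D l k m (z : Mat3)))
    (hne : μ ≠ ∑ i, c i • diracSM (x i)) :
    tvNorm (∑ i, c i • diracSM (x i)) < tvNorm μ := by
  simp only [tvNorm, SignedMeasure.totalVariation_eq_variation]
  set ν : SignedMeasure SO3 := ∑ i, c i • diracSM (x i)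
  choose s hs_abs hs_mul using fun i => exists_abs_eq_one_and_mul_eq_abs ((μ - ν) {x i})
  obtain ⟨q, hq, hqx, hq_lt⟩ := hD.exists_mem_wignerSpan_eq_and_abs_lt_one hN
    (fun i j hij => hsep i j hij) hs_abs
  have hq_cont : Continuous q :=
    Complex.continuous_re.comp (hD.continuous_of_mem_wignerSpan hq)
  have hq_int (κ : SignedMeasure SO3) : κ.Integrable q := integrable_SO3_of_continuous hq_cont _
  have hpair : ∫ᵛ z, q z ∂<•(μ - ν) = 0 := by
    rw [VectorMeasure.integral_sub_vectorMeasure (hq_int μ) (hq_int ν), sub_eq_zero,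
      ← Complex.ofReal_inj, ← pairSM_ofReal μ hq_cont, ← pairSM_ofReal ν hq_cont]
    exact hD.pairSM_eq_of_mem_wignerSpan (fun l hl k m hk hm =>
      hmom l hl k m (by omega) (by omega) (by omega) (by omega)) hq
  exact variation_univ_lt_of_variation_sub_lt_compl (Set.finite_range x).measurableSet
    (variation_sum_smul_dirac_compl_range c x)
    (variation_range_lt_variation_compl hinj (hq_int _) (fun i => by rw [hqx, hs_mul]) hq_lt hpair
      (sub_ne_zero.2 hne))
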